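/- A Borwein polynomial of degree at most 9 with exactly four nonzero coefficients divides no Littlewood polynomial if and only if it equals ±Q(X) for one of the following 10 quadrinomials Q: X^4 + X^3 - X + 1; X^4 - X^3 + X + 1; X^6 - X^5 - X - 1; X^6 + X^5 + X - 1; X^8 - X^5 + X^3 + 1; X^8 + X^5 - X^3 + 1; X^8 + X^7 - X + 1; X^8 - X^7 + X + 1; X^8 + X^6 - X^2 + 1; X^8 - X^6 + X^2 + 1. In particular, there are exactly 20 such quadrinomials. -/

import Mathlib

open Polynomial

/-- A Borwein polynomial: all coefficients in {-1,0,1} and nonzero constant term. -/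
def IsBorwein (P : Polynomial ℤ) : Prop :=
  (∀ i, P.coeff i ∈ ({-1, 0, 1} : Set ℤ)) ∧ P.coeff 0 ≠ 0

/-- A Littlewood polynomial: all coefficients of X^0,...,X^(deg) lie in {-1,1}. -/
def IsLittlewood (L : Polynomial ℤ) : Prop :=
  ∀ i ≤ L.natDegree, L.coeff i ∈ ({-1, 1} : Set ℤ)

/-- The ten listed monic Borwein quadrinomials of degree at most 9 with no
Littlewood multiple. -/
noncomputable def badQuad : List (Polynomial ℤ) :=
  [X ^ 4 + X ^ 3 - X + 1,
   X ^ 4 - X ^ 3 + X + 1,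
   X ^ 6 - X ^ 5 - X - 1,
   X ^ 6 + X ^ 5 + X - 1,
   X ^ 8 - X ^ 5 + X ^ 3 + 1,
   X ^ 8 + X ^ 5 - X ^ 3 + 1,
   X ^ 8 + X ^ 7 - X + 1,
   X ^ 8 - X ^ 7 + X + 1,
   X ^ 8 + X ^ 6 - X ^ 2 + 1,
   X ^ 8 - X ^ 6 + X ^ 2 + 1]


/-- The polynomial with the given list of coefficients, constant term first. -/
noncomputable def toP : List ℤ → ℤ[X]
  | [] => 0
  | a :: l => C a + X * toP l

def addL : List ℤ → List ℤ → List ℤ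
  | [], m => m
  | a :: l, [] => a :: l
  | a :: l, b :: m => Int.add a b :: addL l m

def negL : List ℤ → List ℤ
  | [] => []
  | a :: l => Int.neg a :: negL l

def smulL (c : ℤ) : List ℤ → List ℤ
  | [] => []
  | a :: l => (c * a) :: smulL c l

def mulL : List ℤ → List ℤ → List ℤ
  | [], _ => []
  | a :: l, m => addL (smulL a m) (0 :: mulL l m)

def shiftL : ℕ → List ℤ → List ℤ
  | 0, l => l
  | n + 1, l => 0 :: shiftL n l

def l1 : List ℤ → ℤ
  | [] => 0
  | a :: l => |a| + l1 l

theorem toP_addL (l m : List ℤ) : toP (addL l m) = toP l + toP m := by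
  induction l generalizing m with
  | nil => simp [addL, toP]
  | cons a l ih =>
    cases m with
    | nil => simp [addL, toP]
    | cons b m =>
      have h : Int.add a b = a + b := rfl
      simp only [addL, toP, ih, h, C_add]
      ring

theorem toP_negL (l : List ℤ) : toP (negL l) = - toP l := by
  induction l with
  | nil => simp [negL, toP]
  | cons a l ih =>
    have h : Int.neg a = -a := rfl
    simp only [negL, toP, ih, h, C_neg]
    ring

theorem toP_smulL (c : ℤ) (l : List ℤ) : toP (smulL c l) = C c * toP l := by
  induction l with
  | nil => simp [smulL, toP]
  | cons a l ih =>
    simp only [smulL, toP, ih, C_mul]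
    ring

theorem toP_mulL (l m : List ℤ) : toP (mulL l m) = toP l * toP m := by
  induction l with
  | nil => simp [mulL, toP]
  | cons a l ih =>
    simp only [mulL, toP, toP_addL, toP_smulL, ih, C_0]
    ring

theorem toP_shiftL (n : ℕ) (l : List ℤ) : toP (shiftL n l) = X ^ n * toP l := by
  induction n with
  | zero => simp [shiftL]
  | succ n ih =>
    simp only [shiftL, toP, ih, C_0]
    ring

theorem coeff_toP_zero (a : ℤ) (l : List ℤ) : (toP (a :: l)).coeff 0 = a := by
  simp [toP]

theorem coeff_toP_succ (a : ℤ) (l : List ℤ) (n : ℕ) :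
    (toP (a :: l)).coeff (n + 1) = (toP l).coeff n := by
  rw [toP, coeff_add, coeff_X_mul, coeff_C_succ, zero_add]

theorem coeff_toP (l : List ℤ) (n : ℕ) : (toP l).coeff n = l.getD n 0 := by
  induction l generalizing n with
  | nil => simp [toP]
  | cons a l ih =>
    cases n with
    | zero => simp [coeff_toP_zero]
    | succ n => rw [coeff_toP_succ, ih]; simp

/-- `P` has no Littlewood multiple. -/
def NoLM (P : ℤ[X]) : Prop := ¬ ∃ L : ℤ[X], IsLittlewood L ∧ P ∣ L

/-! ### Bounds for the quotient -/

theorem coeff_mul_le (l : List ℤ) (G : ℤ[X]) (M : ℤ) (hM : ∀ n, |G.coeff n| ≤ M) (n : ℕ) :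
    |(toP l * G).coeff n| ≤ l1 l * M := by
  have hM0 : 0 ≤ M := (abs_nonneg _).trans (hM 0)
  have l1_nonneg : ∀ l : List ℤ, 0 ≤ l1 l := by
    intro l
    induction l with
    | nil => simp [l1]
    | cons a l ih => have := abs_nonneg a; simp only [l1]; omega
  induction l generalizing n with
  | nil => simp [toP, l1]
  | cons a l ih =>
    have e : toP (a :: l) * G = C a * G + X * (toP l * G) := by simp only [toP]; ring
    rw [e, coeff_add, coeff_C_mul, l1, add_mul]
    refine (abs_add_le _ _).trans (add_le_add ?_ ?_)
    · rw [abs_mul]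
      exact mul_le_mul_of_nonneg_left (hM n) (abs_nonneg a)
    · cases n with
      | zero => simpa using mul_nonneg (l1_nonneg l) hM0
      | succ n => rw [coeff_X_mul]; exact ih n

def errL (p A : List ℤ) (c : ℤ) (m : ℕ) (R : List ℤ) : List ℤ :=
  addL (shiftL m (smulL c A)) (negL (mulL R p))

theorem functional_bound (p A : List ℤ) (c : ℤ) (hc : 0 ≤ c) (m : ℕ) (R : List ℤ)
    (Q : ℤ[X]) (hL : ∀ n, |(toP p * Q).coeff n| ≤ 1) (M : ℤ) (hM : ∀ n, |Q.coeff n| ≤ M) (n : ℕ) :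
    c * |(toP A * Q).coeff n| ≤ l1 R + l1 (errL p A c m R) * M := by
  have e : X ^ m * (C c * (toP A * Q)) =
      toP R * (toP p * Q) + toP (errL p A c m R) * Q := by
    simp only [errL, toP_addL, toP_shiftL, toP_smulL, toP_negL, toP_mulL]
    ring
  have h := congrArg (fun F => F.coeff (n + m)) e
  simp only [coeff_X_pow_mul, coeff_C_mul, coeff_add] at h
  have h1 := coeff_mul_le R (toP p * Q) 1 hL (n + m)
  have h2 := coeff_mul_le (errL p A c m R) Q M hM (n + m)
  have h3 : c * |(toP A * Q).coeff n| = |c * (toP A * Q).coeff n| := by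
    rw [abs_mul, abs_of_nonneg hc]
  rw [h3, h]
  refine (abs_add_le _ _).trans ?_
  linarith

/-- Numerical check giving the bound `B` on the coefficients of the quotient. -/
def chkB (p : List ℤ) (B : ℤ) (c : ℤ) (m : ℕ) (R : List ℤ) : Bool :=
  decide (0 ≤ c ∧ 0 ≤ B ∧ l1 (errL p [1] c m R) < c ∧
    l1 R < (c - l1 (errL p [1] c m R)) * (B + 1))

/-- Numerical check giving the bound `b` on the functional `A`. -/
def chkA (p A : List ℤ) (B b : ℤ) (c : ℤ) (m : ℕ) (R : List ℤ) : Bool :=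
  decide (0 < c ∧ l1 R + l1 (errL p A c m R) * B < c * (b + 1))

theorem quot_bound (p : List ℤ) (B c : ℤ) (m : ℕ) (R : List ℤ) (h : chkB p B c m R = true)
    (Q : ℤ[X]) (hL : ∀ n, |(toP p * Q).coeff n| ≤ 1) (n : ℕ) : |Q.coeff n| ≤ B := by
  obtain ⟨hc, hB, h1, h2⟩ := of_decide_eq_true h
  obtain ⟨k, -, hk⟩ := Finset.exists_max_image (Finset.range (Q.natDegree + 1))
    (fun i => |Q.coeff i|) ⟨0, by simp⟩
  have hM : ∀ i, |Q.coeff i| ≤ |Q.coeff k| := by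
    intro i
    by_cases hi : i ≤ Q.natDegree
    · exact hk i (by simp; omega)
    · rw [coeff_eq_zero_of_natDegree_lt (by omega)]; simp
  have h3 := functional_bound p [1] c hc m R Q hL _ hM k
  have e : toP [1] * Q = Q := by simp [toP]
  rw [e] at h3
  refine (hM n).trans ?_
  by_contra hlt
  have h4 : B + 1 ≤ |Q.coeff k| := by omega
  have h5 : (c - l1 (errL p [1] c m R)) * (B + 1) ≤
      (c - l1 (errL p [1] c m R)) * |Q.coeff k| :=
    mul_le_mul_of_nonneg_left h4 (by omega)
  linarith

theorem func_bound (p A : List ℤ) (B b c : ℤ) (m : ℕ) (R : List ℤ)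
    (h : chkA p A B b c m R = true) (Q : ℤ[X]) (hL : ∀ n, |(toP p * Q).coeff n| ≤ 1)
    (hB : ∀ n, |Q.coeff n| ≤ B) (n : ℕ) : |(toP A * Q).coeff n| ≤ b := by
  obtain ⟨hc, h1⟩ := of_decide_eq_true h
  have h3 := functional_bound p A c hc.le m R Q hL _ hB n
  by_contra hlt
  have h4 : b + 1 ≤ |(toP A * Q).coeff n| := by omega
  have h5 := mul_le_mul_of_nonneg_left h4 hc.le
  linarith

/-! ### The search -/

/-- Signs: zero, plus, minus. -/
inductive Sg where
  | z : Sg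
  | p : Sg
  | m : Sg

def Sg.toZ : Sg → ℤ
  | .z => 0
  | .p => 1
  | .m => -1

def dotS : List Sg → List ℤ → ℤ
  | [], _ => 0
  | _ :: _, [] => 0
  | .z :: l, _ :: h => dotS l h
  | .p :: l, a :: h => Int.add a (dotS l h)
  | .m :: l, a :: h => Int.sub (dotS l h) a

/-- `|q| ≤ B`. -/
def leB (q : ℤ) (B : ℕ) : Bool :=
  match q with
  | .ofNat k => Nat.ble k B
  | .negSucc k => Nat.ble (k + 1) B

theorem leB_of_le (q : ℤ) (B : ℕ) (h : |q| ≤ B) : leB q B = true := by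
  rcases q with k | k
  · simp only [leB]
    rw [Nat.ble_eq]
    have : ((k : ℤ)) ≤ B := (le_abs_self _).trans h
    exact_mod_cast this
  · simp only [leB]
    rw [Nat.ble_eq]
    have : -(Int.negSucc k) ≤ (B : ℤ) := (neg_le_abs _).trans h
    have e : Int.negSucc k = -((k : ℤ) + 1) := rfl
    omega

/-- `forceN n f = f n`, with the argument evaluated first. -/
noncomputable def forceN (n : ℕ) (f : ℕ → Bool) : Bool :=
  Nat.rec (f 0) (fun k _ => f (Nat.succ k)) n

theorem forceN_eq (n : ℕ) (f : ℕ → Bool) : forceN n f = f n := by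
  cases n <;> rfl

/-- One branch of the search: append the digit `t` to the history `w`. -/
noncomputable def branch (chk : ℕ → ℕ → Bool) (M Z : ℕ) (ih : ℕ → Bool) (w t : ℕ) : Bool :=
  cond (chk w t) (forceN (Nat.add (Nat.mul 64 w) t) fun w' =>
    cond (Nat.beq (Nat.mod w' M) Z) false (ih w')) true

/-- `dfsN … k w = true` : no admissible continuation of the history `w` survives `k` steps. -/
noncomputable def dfsN (st : ℕ → ℕ) (chk : ℕ → ℕ → Bool) (M Z : ℕ) (k : ℕ) : ℕ → Bool :=
  Nat.rec (fun _ => false) (fun _ ih w =>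
    forceN (st w) fun t =>
      cond (branch chk M Z ih w t)
        (forceN (Nat.add t 2) fun t' => branch chk M Z ih w t') false) k

/-- Digit of `w` in base 64 at the power `s` of 64. -/
def dig (w s : ℕ) : ℕ := Nat.mod (Nat.div w s) 64

/-- `lo ≤ u ≤ hi`. -/
def rg (lo hi u : ℕ) : Bool := cond (Nat.ble lo u) (Nat.ble u hi) false

theorem rg_of (lo hi u : ℕ) (h1 : lo ≤ u) (h2 : u ≤ hi) : rg lo hi u = true := by
  rw [rg, Nat.ble_eq.mpr h1, Nat.ble_eq.mpr h2]; rfl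

/-- Histories packed in base 64, digit `a + 32` for the value `a`. -/
def enc : List ℤ → ℕ
  | [] => 9150170671482912
  | a :: h => 64 * enc h + (a + 32).toNat

def Zn : ℕ → ℕ
  | 0 => 0
  | d + 1 => 64 * Zn d + 32

theorem dig_enc (h : List ℤ) (hb : ∀ a ∈ h, |a| ≤ 7) (j : ℕ) (hj : j < 9) (s : ℕ)
    (hs : s = 64 ^ j) :
    -7 ≤ h.getD j 0 ∧ h.getD j 0 ≤ 7 ∧ (dig (enc h) s : ℤ) = h.getD j 0 + 32 := by
  subst hs
  induction h generalizing j with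
  | nil =>
    refine ⟨by simp, by simp, ?_⟩
    interval_cases j <;> decide
  | cons a h ih =>
    have ha := abs_le.mp (hb a (by simp))
    cases j with
    | zero =>
      refine ⟨by simpa using ha.1, by simpa using ha.2, ?_⟩
      have e : dig (enc (a :: h)) (64 ^ 0) = (64 * enc h + (a + 32).toNat) % 64 := by
        show (enc (a :: h) / 64 ^ 0) % 64 = _
        rw [pow_zero, Nat.div_one, enc]
      rw [e, List.getD_cons_zero]
      omega
    | succ j =>
      have e : dig (enc (a :: h)) (64 ^ (j + 1)) = dig (enc h) (64 ^ j) := by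
        show (enc (a :: h) / 64 ^ (j + 1)) % 64 = (enc h / 64 ^ j) % 64
        rw [pow_succ', ← Nat.div_div_eq_div_mul, enc]
        congr 2
        omega
      rw [e, List.getD_cons_succ]
      exact ih (fun x hx => hb x (by simp [hx])) j (by omega)

/-- Coefficients `n-1, …, 0` of `Q`. -/
def hist (Q : ℤ[X]) : ℕ → List ℤ
  | 0 => []
  | n + 1 => Q.coeff n :: hist Q n

def toZs (l : List Sg) : List ℤ := l.map Sg.toZ

theorem dotS_nil (l : List Sg) : dotS l [] = 0 := by cases l <;> rfl

theorem dotS_cons (s : Sg) (l : List Sg) (a : ℤ) (h : List ℤ) :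
    dotS (s :: l) (a :: h) = s.toZ * a + dotS l h := by
  cases s
  · simp [dotS, Sg.toZ]
  · have : ∀ x y, Int.add x y = x + y := fun _ _ => rfl
    rw [dotS, this, Sg.toZ, one_mul]
  · have : ∀ x y, Int.sub x y = x - y := fun _ _ => rfl
    simp [dotS, Sg.toZ, this]; ring

theorem coeff_eq_dot (a : ℤ) (l : List Sg) (Q : ℤ[X]) (n : ℕ) :
    (toP (a :: toZs l) * Q).coeff n = a * Q.coeff n + dotS l (hist Q n) := by
  induction l generalizing n a with
  | nil => simp [toP, toZs, dotS]
  | cons s l ih =>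
    have e : toP (a :: toZs (s :: l)) * Q = C a * Q + X * (toP (s.toZ :: toZs l) * Q) := by
      simp only [toZs, List.map_cons, toP]; ring
    rw [e, coeff_add, coeff_C_mul]
    cases n with
    | zero => simp [hist, dotS]
    | succ n => rw [coeff_X_mul, ih, hist, dotS_cons]

theorem dotS_step (s : Sg) (l : List Sg) (h : List ℤ) :
    dotS (s :: l) h = s.toZ * h.getD 0 0 + dotS l h.tail := by
  cases h with
  | nil => simp [dotS, dotS_nil]
  | cons a h => simp [dotS_cons]

theorem tail_getD (h : List ℤ) (j : ℕ) : h.tail.getD j 0 = h.getD (j + 1) 0 := by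
  cases h <;> simp

theorem enc_mod (Q : ℤ[X]) (d n : ℕ) (hd : d ≤ 9) (h : ∀ i, n ≤ i + d → Q.coeff i = 0) :
    enc (hist Q n) % 64 ^ d = Zn d := by
  induction d generalizing n with
  | zero => simp [Zn, Nat.mod_one]
  | succ d ih =>
    cases n with
    | zero =>
      have : d < 9 := by omega
      simp only [hist, enc]
      clear ih h hd
      interval_cases d <;> decide
    | succ n =>
      have h0 : Q.coeff n = 0 := h n (by omega)
      have h1 := ih n (by omega) (fun i hi => h i (by omega))
      have e : enc (hist Q (n + 1)) = 64 * enc (hist Q n) + 32 := by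
        simp [hist, enc, h0]
      have h2 := Nat.div_add_mod (enc (hist Q n)) (64 ^ d)
      have h3 : 64 * enc (hist Q n) + 32 =
          (64 * Zn d + 32) + 64 ^ (d + 1) * (enc (hist Q n) / 64 ^ d) := by
        rw [pow_succ]
        rw [h1] at h2
        nlinarith
      have h4 : Zn d < 64 ^ d := h1 ▸ Nat.mod_lt _ (by positivity)
      rw [e, h3, Nat.add_mul_mod_self_left, Zn, Nat.mod_eq_of_lt]
      rw [pow_succ]; omega

theorem dfs_sound (ps : List Sg) (Fs : List (List Sg × ℕ)) (d B : ℕ) (hB7 : B ≤ 7) (hd9 : d ≤ 9)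
    (st : ℕ → ℕ) (chk : ℕ → ℕ → Bool)
    (hst : ∀ h : List ℤ, (∀ a ∈ h, |a| ≤ 7) → (st (enc h) : ℤ) = 31 - dotS ps h)
    (hchk : ∀ h : List ℤ, (∀ a ∈ h, |a| ≤ 7) → ∀ (q : ℤ) (u : ℕ), (u : ℤ) = q + 32 → |q| ≤ B →
      (∀ F ∈ Fs, |q + dotS F.1 h| ≤ F.2) → chk (enc h) u = true)
    (Q : ℤ[X]) (N : ℕ)
    (hL : ∀ n ≤ N, (toP (1 :: toZs ps) * Q).coeff n = 1 ∨ (toP (1 :: toZs ps) * Q).coeff n = -1)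
    (hB : ∀ n, |Q.coeff n| ≤ B)
    (hb : ∀ F ∈ Fs, ∀ n, |(toP (1 :: toZs F.1) * Q).coeff n| ≤ F.2)
    (hN : ∀ i, N + 1 ≤ i + d → Q.coeff i = 0) (k n : ℕ) (hn : n ≤ N)
    (h : dfsN st chk (64 ^ d) (Zn d) k (enc (hist Q n)) = true) : False := by
  have hist7 : ∀ n, ∀ a ∈ hist Q n, |a| ≤ 7 := by
    intro n
    induction n with
    | zero => simp [hist]
    | succ n ih =>
      intro a ha
      rcases List.mem_cons.mp ha with rfl | ha
      · exact (hB n).trans (by exact_mod_cast hB7)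
      · exact ih a ha
  induction k generalizing n with
  | zero => exact absurd h (by simp [dfsN])
  | succ k ih =>
    have hq := abs_le.mp ((hB n).trans (by exact_mod_cast hB7 : (B : ℤ) ≤ 7))
    obtain ⟨u, hu⟩ : ∃ u : ℕ, (u : ℤ) = Q.coeff n + 32 := ⟨(Q.coeff n + 32).toNat, by omega⟩
    have hc := hchk _ (hist7 n) (Q.coeff n) u hu (hB n) (by
      intro F hF
      have := hb F hF n
      rwa [coeff_eq_dot, one_mul] at this)
    have hL' := hL n hn
    rw [coeff_eq_dot, one_mul] at hL'
    have hs := hst _ (hist7 n)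
    have key : branch chk (64 ^ d) (Zn d) (dfsN st chk (64 ^ d) (Zn d) k)
        (enc (hist Q n)) u = true := by
      have h' : forceN (st (enc (hist Q n))) (fun t =>
          cond (branch chk (64 ^ d) (Zn d) (dfsN st chk (64 ^ d) (Zn d) k) (enc (hist Q n)) t)
            (forceN (Nat.add t 2) fun t' =>
              branch chk (64 ^ d) (Zn d) (dfsN st chk (64 ^ d) (Zn d) k) (enc (hist Q n)) t')
            false) = true := h
      rw [forceN_eq, forceN_eq, Bool.cond_false_right, Bool.and_eq_true] at h'
      rcases hL' with hq | hq
      · have e : Nat.add (st (enc (hist Q n))) 2 = u := by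
          show st (enc (hist Q n)) + 2 = u
          omega
        rw [← e]; exact h'.2
      · have e : st (enc (hist Q n)) = u := by omega
        rw [← e]; exact h'.1
    have e : Nat.add (Nat.mul 64 (enc (hist Q n))) u = enc (hist Q (n + 1)) := by
      show 64 * enc (hist Q n) + u = 64 * enc (hist Q n) + (Q.coeff n + 32).toNat
      omega
    rw [branch, hc, forceN_eq, e, cond_true] at key
    by_cases hnN : n = N
    · subst hnN
      have hz : Nat.beq (Nat.mod (enc (hist Q (n + 1))) (64 ^ d)) (Zn d) = true :=
        by rw [Nat.beq_eq]; exact enc_mod Q d (n + 1) hd9 hN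
      rw [hz] at key
      simp at key
    · cases hz : Nat.beq (Nat.mod (enc (hist Q (n + 1))) (64 ^ d)) (Zn d) with
      | true => rw [hz] at key; simp at key
      | false =>
        rw [hz] at key
        exact ih (n + 1) (by omega) key

theorem lw_neg {L : ℤ[X]} (h : IsLittlewood L) : IsLittlewood (-L) := by
  intro i hi
  rw [natDegree_neg] at hi
  have := h i hi
  simp only [Set.mem_insert_iff, Set.mem_singleton_iff, coeff_neg] at this ⊢
  omega

theorem noLM_of_search (ps : List Sg) (Fs : List (List Sg × ℕ)) (d B k : ℕ)
    (st : ℕ → ℕ) (chk : ℕ → ℕ → Bool) (M Z : ℕ) (c : ℤ) (m : ℕ) (R : List ℤ)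
    (h1 : chkB (1 :: toZs ps) B c m R = true)
    (h2 : ∀ F ∈ Fs, ∃ c m R, chkA (1 :: toZs ps) (1 :: toZs F.1) B F.2 c m R = true)
    (h3 : decide (1 ≤ d ∧ d ≤ 9 ∧ B ≤ 7 ∧ M = 64 ^ d ∧ Z = Zn d ∧
      (1 :: toZs ps).getD d 0 ≠ 0) = true)
    (hst : ∀ h : List ℤ, (∀ a ∈ h, |a| ≤ 7) → (st (enc h) : ℤ) = 31 - dotS ps h)
    (hchk : ∀ h : List ℤ, (∀ a ∈ h, |a| ≤ 7) → ∀ (q : ℤ) (u : ℕ), (u : ℤ) = q + 32 → |q| ≤ B →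
      (∀ F ∈ Fs, |q + dotS F.1 h| ≤ F.2) → chk (enc h) u = true)
    (h6 : dfsN st chk M Z k 585610922974906401 = true) : NoLM (toP (1 :: toZs ps)) := by
  rintro ⟨L, hL, Q, rfl⟩
  obtain ⟨hd, hd9, hB7, rfl, rfl, h5⟩ := of_decide_eq_true h3
  set P := toP (1 :: toZs ps) with hP
  -- degree of P
  have hlast : P.coeff d ≠ 0 := by
    rw [hP, coeff_toP]
    exact h5
  -- we may assume the constant term of Q is 1
  have main : ∀ Q : ℤ[X], IsLittlewood (P * Q) → Q.coeff 0 = 1 → False := by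
    intro Q hL hQ
    have hL1 : ∀ n, |(P * Q).coeff n| ≤ 1 := by
      intro n
      by_cases hn : n ≤ (P * Q).natDegree
      · rcases hL n hn with h | h
        · rw [h]; simp
        · rw [Set.mem_singleton_iff.mp h]; simp
      · rw [coeff_eq_zero_of_natDegree_lt (by omega)]; simp
    have hB := quot_bound _ _ _ _ _ h1 Q hL1
    have hb : ∀ F ∈ Fs, ∀ n, |(toP (1 :: toZs F.1) * Q).coeff n| ≤ F.2 := by
      intro F hF
      obtain ⟨c', m', R', h2'⟩ := h2 F hF
      exact func_bound _ _ _ _ _ _ _ h2' Q hL1 hB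
    have hQ0 : Q ≠ 0 := by rintro rfl; simp at hQ
    have hP0 : P ≠ 0 := by rintro h; rw [h] at hlast; simp at hlast
    have hdeg : d + Q.natDegree ≤ (P * Q).natDegree := by
      rw [natDegree_mul hP0 hQ0]
      have := le_natDegree_of_ne_zero hlast
      omega
    have hh : enc (hist Q 1) = 585610922974906401 := by simp [hist, hQ, enc]
    rw [← hh] at h6
    refine dfs_sound ps Fs d B hB7 hd9 st chk hst hchk Q (P * Q).natDegree ?_ hB hb ?_ k 1 ?_ h6
    · intro n hn
      have := hL n hn
      simp only [Set.mem_insert_iff, Set.mem_singleton_iff] at this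
      exact this.symm
    · intro i hi
      exact coeff_eq_zero_of_natDegree_lt (by omega)
    · omega
  have h0 := hL 0 (Nat.zero_le _)
  have e0 : (P * Q).coeff 0 = Q.coeff 0 := by
    rw [mul_coeff_zero, hP, coeff_toP_zero, one_mul]
  rw [e0] at h0
  rcases h0 with h | h
  · refine main (-Q) ?_ (by rw [coeff_neg, h]; rfl)
    rw [mul_neg]
    exact lw_neg hL
  · exact main Q hL h

/-- Approximate inverse of the quadrinomial, scaled by 100. -/
def qaR : List ℤ :=
  [
    1, 1, 1, 0, -2, -5, -6, -4, 2, 13, 24, 26, 11, -26, 24, -13, 2, 4, -6, 5, -2, 0, 1, -1, 1, 0,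
    0, 0]

def qaSt : ℕ → ℕ := fun w => Nat.sub (Nat.add 63 (dig w 1)) (Nat.add (dig w 4096) (dig w 262144))

def qaChk : ℕ → ℕ → Bool := fun _ u => rg 31 33 u

theorem qa_search : dfsN qaSt qaChk 16777216 8521760 60 585610922974906401 = true := by
  decide +kernel

theorem qa_no' : NoLM (toP (1 :: toZs [.m, .z, .p, .p])) := by
  refine noLM_of_search [.m, .z, .p, .p]
    [] 4 1 60 qaSt qaChk
    16777216 8521760 100 14 qaR (by decide +kernel) ?_ (by decide +kernel) ?_ ?_
    qa_search
  · simp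
  · intro h hb
    have e0 := dig_enc h hb 0 (by norm_num) 1 (by norm_num)
    have e2 := dig_enc h hb 2 (by norm_num) 4096 (by norm_num)
    have e3 := dig_enc h hb 3 (by norm_num) 262144 (by norm_num)
    simp only [qaSt, dotS_step, dotS, tail_getD, Sg.toZ, Nat.add_eq, Nat.sub_eq, zero_add,
      Nat.reduceAdd]
    omega
  · intro h hb q u hu hq hF
    have hq' := abs_le.mp hq
    push_cast at hq'
    exact rg_of _ _ _ (by omega) (by omega)

theorem qa_no : NoLM (toP [1, -1, 0, 1, 1]) := qa_no'

/-- Approximate inverse of the quadrinomial, scaled by 100. -/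
def qbR : List ℤ :=
  [
    -1, 2, -1, -1, 3, -2, -1, 4, -4, 0, 5, -6, 1, 6, -10, 6, 5, -12, 7, 9, -25, 25, -8, -11, 8,
    25, 25, 9, -7, -12, -5, 6, 10, 6, -1, -6, -5, 0, 4, 4, 1, -2, -3, -1, 1, 2, 1, 0, -1, -1, 0, 1]

def qbSt : ℕ → ℕ := fun w => Nat.sub (Nat.add 63 (dig w 1073741824)) (Nat.add (dig w 1) (dig w 16777216))

def qbChk : ℕ → ℕ → Bool := fun _ u => rg 29 35 u

theorem qb_search : dfsN qbSt qbChk 68719476736 34905131040 60 585610922974906401 = true := by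
  decide +kernel

theorem qb_no' : NoLM (toP (1 :: toZs [.p, .z, .z, .z, .p, .m])) := by
  refine noLM_of_search [.p, .z, .z, .z, .p, .m]
    [] 6 3 60 qbSt qbChk
    68719476736 34905131040 100 26 qbR (by decide +kernel) ?_ (by decide +kernel) ?_ ?_
    qb_search
  · simp
  · intro h hb
    have e0 := dig_enc h hb 0 (by norm_num) 1 (by norm_num)
    have e4 := dig_enc h hb 4 (by norm_num) 16777216 (by norm_num)
    have e5 := dig_enc h hb 5 (by norm_num) 1073741824 (by norm_num)
    simp only [qbSt, dotS_step, dotS, tail_getD, Sg.toZ, Nat.add_eq, Nat.sub_eq, zero_add,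
      Nat.reduceAdd]
    omega
  · intro h hb q u hu hq hF
    have hq' := abs_le.mp hq
    push_cast at hq'
    exact rg_of _ _ _ (by omega) (by omega)

theorem qb_no : NoLM (toP [1, 1, 0, 0, 0, 1, -1]) := qb_no'

/-- Approximate inverse of the quadrinomial, scaled by 300. -/
def qcR : List ℤ :=
  [
    1, -2, 2, -2, 2, -2, 1, 0, -2, 3, -4, 5, -5, 5, -3, 1, 2, -6, 8, -10, 12, -11, 7, -5, -2, 11,
    -13, 19, -28, 22, -15, 20, -2, -25, 16, -31, 73, -40, 21, -77, 11, 77, 21, 40, 73, 31, 16, 25,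
    -2, -20, -15, -22, -28, -19, -13, -11, -2, 5, 7, 11, 12, 10, 8, 6, 2, -1, -3, -5, -5, -5, -4,
    -3, -2, 0, 1, 2, 2, 2, 2, 2, 1, 0, 0, -1, -1, -1, -1, -1]

/-- Approximation of an auxiliary functional divided by the quadrinomial, scaled by 1000. -/
def qcS0 : List ℤ :=
  [
    5, -7, 9, -10, 9, -6, 4, 2, -9, 12, -16, 22, -20, 14, -14, 2, 17, -18, 29, -54, 39, -25, 49,
    -12, -46, 8, -41, 149, -60, 21, -190, 31, 174, 122, 31, -513, -31, 122, 826, 31, 190, 21, 60,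
    149, 41, 8, 46, -12, -49, -25, -39, -54, -29, -18, -17, 2, 14, 14, 20, 22, 16, 12, 9, 2, -4,
    -6, -9, -10, -9, -7, -5, -2, 1, 2, 4, 5, 4, 4, 3, 1]

/-- Approximation of an auxiliary functional divided by the quadrinomial, scaled by 1000. -/
def qcS1 : List ℤ :=
  [
    3, -7, 10, -11, 12, -11, 7, -2, -4, 11, -18, 23, -25, 24, -19, 9, 2, -18, 34, -44, 51, -56,
    44, -26, 10, 25, -64, 78, -103, 129, -98, 65, -61, -30, 127, -115, 198, -318, 183, -136, 264,
    44, -310, 34, -378, 891, -173, 204, -121, -250, -3, -86, -169, -9, 9, -38, 44, 72, 32, 51, 59,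
    21, 12, 10, -14, -24, -20, -26, -25, -15, -10, -5, 4, 8, 10, 12, 12, 9, 6, 3, 0, -3, -4, -6,
    -6, -5, -4, -2, 0, 1, 2, 2, 3, 2, 2, 1]

/-- Approximation of an auxiliary functional divided by the quadrinomial, scaled by 5000. -/
def qcS2 : List ℤ :=
  [
    18, -22, 22, -20, 13, -4, -9, 22, -34, 43, -48, 45, -35, 17, 7, -35, 63, -85, 99, -101, 85,
    -54, 10, 49, -110, 160, -203, 221, -196, 147, -71, -56, 184, -285, 405, -475, 425, -368, 261,
    36, -292, 450, -809, 1028, -839, 884, -839, -6, 436, -450, 1698, -2302, 1283, -2147, 2691,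
    420, -591, -957, 735, 584, 94, 821, 768, 221, 354, 283, -135, -170, -157, -332, -315, -199,
    -192, -125, 1, 48, 83, 139, 141, 116, 102, 68, 21, -9, -35, -58, -64, -60, -53, -38, -19, -2,
    12, 24, 29, 30, 27, 21, 13, 4, -3, -9, -13, -14, -13, -11, -8, -4, 0, 3, 5, 6, 7, 6, 4, 3]

def qcSt : ℕ → ℕ := fun w => Nat.sub (Nat.add 63 (dig w 16777216)) (Nat.add (dig w 4096) (dig w 4398046511104))

def qcChk : ℕ → ℕ → Bool := fun w u => cond (rg 29 35 u) (cond (rg 61 67 (Nat.sub (Nat.add (Nat.add u (dig w 1)) (dig w 1073741824)) (dig w 4096))) (cond (rg 59 69 (Nat.sub (Nat.add (Nat.add 64 u) (dig w 16777216)) (Nat.add (dig w 64) (dig w 262144)))) (rg 59 69 (Nat.sub (Nat.add (Nat.add 32 u) (dig w 262144)) (dig w 1))) false) false) false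

theorem qc_search : dfsN qcSt qcChk 281474976710656 142971416741920 60 585610922974906401 = true := by
  decide +kernel

theorem qc_no' : NoLM (toP (1 :: toZs [.z, .z, .p, .z, .m, .z, .z, .p])) := by
  refine noLM_of_search [.z, .z, .p, .z, .m, .z, .z, .p]
    [([.p, .z, .m, .z, .z, .p], 3),
     ([.z, .m, .z, .m, .p], 5),
     ([.m, .z, .z, .p], 5)] 8 3 60 qcSt qcChk
    281474976710656 142971416741920 300 44 qcR (by decide +kernel) ?_ (by decide +kernel) ?_ ?_
    qc_search
  · simp only [List.forall_mem_cons]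
    refine ⟨?_, ?_, ?_, by simp⟩
    · exact ⟨1000, 40, qcS0, by decide +kernel⟩
    · exact ⟨1000, 48, qcS1, by decide +kernel⟩
    · exact ⟨5000, 58, qcS2, by decide +kernel⟩
  · intro h hb
    have e2 := dig_enc h hb 2 (by norm_num) 4096 (by norm_num)
    have e4 := dig_enc h hb 4 (by norm_num) 16777216 (by norm_num)
    have e7 := dig_enc h hb 7 (by norm_num) 4398046511104 (by norm_num)
    simp only [qcSt, dotS_step, dotS, tail_getD, Sg.toZ, Nat.add_eq, Nat.sub_eq, zero_add,
      Nat.reduceAdd]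
    omega
  · intro h hb q u hu hq hF
    have e0 := dig_enc h hb 0 (by norm_num) 1 (by norm_num)
    have e1 := dig_enc h hb 1 (by norm_num) 64 (by norm_num)
    have e2 := dig_enc h hb 2 (by norm_num) 4096 (by norm_num)
    have e3 := dig_enc h hb 3 (by norm_num) 262144 (by norm_num)
    have e4 := dig_enc h hb 4 (by norm_num) 16777216 (by norm_num)
    have e5 := dig_enc h hb 5 (by norm_num) 1073741824 (by norm_num)
    have hq' := abs_le.mp hq
    simp only [List.forall_mem_cons, dotS_step, dotS, tail_getD, Sg.toZ, zero_add,
      Nat.reduceAdd, abs_le] at hF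
    push_cast at hq' hF
    have hF1 := hF.1
    have hF2 := hF.2.1
    have hF3 := hF.2.2.1
    clear hF
    simp only [qcChk, Nat.add_eq, Nat.sub_eq]
    rw [rg_of _ _ u (by omega) (by omega), cond_true, rg_of _ _ _ (by omega) (by omega), cond_true,
      rg_of _ _ _ (by omega) (by omega), cond_true, rg_of _ _ _ (by omega) (by omega)]

theorem qc_no : NoLM (toP [1, 0, 0, 1, 0, -1, 0, 0, 1]) := qc_no'

/-- Approximate inverse of the quadrinomial, scaled by 500. -/
def qdR : List ℤ :=
  [
    5, 2, -3, -5, -1, 5, 6, -1, -7, -6, 3, 9, 5, -6, -11, -3, 10, 13, 0, -14, -13, 4, 19, 13, -10,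
    -23, -9, 19, 28, 4, -28, -31, 2, 34, 24, -22, -54, -30, 29, 58, 23, -35, -37, 40, 124, 126,
    39, -42, -30, 42, 39, -126, 124, -40, -37, 35, 23, -58, 29, 30, -54, 22, 24, -34, 2, 31, -28,
    -4, 28, -19, -9, 23, -10, -13, 19, -4, -13, 14, 0, -13, 10, 3, -11, 6, 5, -9, 3, 6, -7, 1, 6,
    -5, -1, 5, -3, -2, 5, -2, -3, 4, -1, -3, 3, 0]

/-- Approximation of an auxiliary functional divided by the quadrinomial, scaled by 200. -/
def qdS0 : List ℤ :=
  [
    4, 4, -1, -6, -4, 3, 7, 3, -5, -8, -2, 8, 9, 0, -11, -9, 4, 15, 9, -8, -17, -5, 15, 20, 1,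
    -22, -23, 2, 24, 14, -21, -43, -22, 23, 44, 18, -20, -13, 51, 116, 115, 49, -13, -12, 20, -18,
    15, -17, 19, -17, 8, 0, -3, 0, 2, -1, -3, 5, -3, 0, 2, 0, -2, 2, 0, -2, 2, 0, -1, 1, 1, -1, 1,
    1, -1, 0, 1, -1, 0, 1, -1, 0, 1, 0, 0, 1, 0, 0, 0, 0, 0, 0]

/-- Approximation of an auxiliary functional divided by the quadrinomial, scaled by 1000. -/
def qdS1 : List ℤ :=
  [
    -2, -2, 0, 3, 2, -1, -4, -2, 3, 5, 1, -4, -5, 0, 6, 5, -2, -8, -5, 5, 10, 4, -8, -11, -1, 12,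
    12, -3, -16, -12, 8, 20, 9, -14, -24, -5, 22, 26, -2, -31, -26, 12, 41, 24, -25, -49, -17, 41,
    56, 4, -60, -59, 15, 81, 56, -41, -101, -44, 75, 120, 24, -113, -128, 14, 158, 127, -67, -211,
    -122, 119, 233, 62, -224, -284, -6, 327, 330, -22, -317, -155, 354, 643, 322, -335, -643,
    -304, 168, -31, -28, 7, 21, 0, -53, 82, -55, 3, 23, -5, -25, 28, 0, -27, 25, 0, -18, 12, 9,
    -19, 8, 10, -15, 4, 10, -11, -1, 10, -8, -3, 9, -5, -4, 7, -2, -5, 6, -1, -5, 4, 1, -4, 3, 2,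
    -4, 2, 2, -3, 1, 2, -2, 0, 2, -2, -1, 2, -1, -1, 1, 0, -1, 1, 0, -1, 1, 0, -1, 1, 0, -1, 0, 0,
    -1, 0, 0, 0, 0, 0, 0, 0, 0, 0, 0, 0, 0, 0, 0, 0]

/-- Approximation of an auxiliary functional divided by the quadrinomial, scaled by 1000. -/
def qdS2 : List ℤ :=
  [
    5, 4, -2, -7, -4, 4, 8, 2, -7, -9, 0, 10, 9, -3, -13, -9, 7, 16, 7, -13, -19, -3, 19, 20, -3,
    -26, -20, 12, 34, 19, -20, -38, -9, 37, 46, -1, -54, -52, 5, 52, 23, -60, -105, -51, 56, 103,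
    46, -28, 10, 175, 331, 326, 167, 18, 0, 18, -167, -674, -331, 175, -10, -28, -46, 103, -56,
    -51, 105, -60, -23, 52, -5, -52, 54, -1, -46, 37, 9, -38, 20, 19, -34, 12, 20, -26, 3, 20,
    -19, -3, 19, -13, -7, 16, -7, -9, 13, -3, -9, 10, 0, -9, 7, 2, -8, 4, 4, -7, 2, 4, -5, 0, 4,
    -4, -1, 4, -2, -1]

def qdSt : ℕ → ℕ := fun w => Nat.sub (Nat.add 63 (dig w 1)) (Nat.add (dig w 68719476736) (dig w 4398046511104))

def qdChk : ℕ → ℕ → Bool := fun w u => cond (rg 28 36 u) (cond (rg 91 101 (Nat.add (Nat.add u (dig w 1)) (dig w 64))) (cond (rg 57 71 (Nat.sub (Nat.add (Nat.add 64 u) (dig w 1)) (Nat.add (dig w 4096) (dig w 262144)))) (rg 60 68 (Nat.sub (Nat.add (Nat.add 64 u) (dig w 1)) (Nat.add (dig w 1073741824) (dig w 68719476736)))) false) false) false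

theorem qd_search : dfsN qdSt qdChk 281474976710656 142971416741920 60 585610922974906401 = true := by
  decide +kernel

theorem qd_no' : NoLM (toP (1 :: toZs [.m, .z, .z, .z, .z, .z, .p, .p])) := by
  refine noLM_of_search [.m, .z, .z, .z, .z, .z, .p, .p]
    [([.p, .p], 5),
     ([.p, .z, .m, .m], 7),
     ([.p, .z, .z, .z, .z, .m, .m], 4)] 8 4 60 qdSt qdChk
    281474976710656 142971416741920 500 52 qdR (by decide +kernel) ?_ (by decide +kernel) ?_ ?_
    qd_search
  · simp only [List.forall_mem_cons]
    refine ⟨?_, ?_, ?_, by simp⟩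
    · exact ⟨200, 46, qdS0, by decide +kernel⟩
    · exact ⟨1000, 88, qdS1, by decide +kernel⟩
    · exact ⟨1000, 58, qdS2, by decide +kernel⟩
  · intro h hb
    have e0 := dig_enc h hb 0 (by norm_num) 1 (by norm_num)
    have e6 := dig_enc h hb 6 (by norm_num) 68719476736 (by norm_num)
    have e7 := dig_enc h hb 7 (by norm_num) 4398046511104 (by norm_num)
    simp only [qdSt, dotS_step, dotS, tail_getD, Sg.toZ, Nat.add_eq, Nat.sub_eq, zero_add,
      Nat.reduceAdd]
    omega
  · intro h hb q u hu hq hF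
    have e0 := dig_enc h hb 0 (by norm_num) 1 (by norm_num)
    have e1 := dig_enc h hb 1 (by norm_num) 64 (by norm_num)
    have e2 := dig_enc h hb 2 (by norm_num) 4096 (by norm_num)
    have e3 := dig_enc h hb 3 (by norm_num) 262144 (by norm_num)
    have e5 := dig_enc h hb 5 (by norm_num) 1073741824 (by norm_num)
    have e6 := dig_enc h hb 6 (by norm_num) 68719476736 (by norm_num)
    have hq' := abs_le.mp hq
    simp only [List.forall_mem_cons, dotS_step, dotS, tail_getD, Sg.toZ, zero_add,
      Nat.reduceAdd, abs_le] at hF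
    push_cast at hq' hF
    have hF1 := hF.1
    have hF2 := hF.2.1
    have hF3 := hF.2.2.1
    clear hF
    simp only [qdChk, Nat.add_eq, Nat.sub_eq]
    rw [rg_of _ _ u (by omega) (by omega), cond_true, rg_of _ _ _ (by omega) (by omega), cond_true,
      rg_of _ _ _ (by omega) (by omega), cond_true, rg_of _ _ _ (by omega) (by omega)]

theorem qd_no : NoLM (toP [1, -1, 0, 0, 0, 0, 0, 1, 1]) := qd_no'

/-- Approximate inverse of the quadrinomial, scaled by 100. -/
def qeR : List ℤ :=
  [
    1, 0, 1, 0, 1, 0, 0, 0, -2, 0, -5, 0, -6, 0, -4, 0, 2, 0, 13, 0, 24, 0, 26, 0, 11, 0, -26, 0,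
    24, 0, -13, 0, 2, 0, 4, 0, -6, 0, 5, 0, -2, 0, 0, 0, 1, 0, -1, 0, 1, 0, 0, 0, 0, 0, 0, 0]

def qeSt : ℕ → ℕ := fun w => Nat.sub (Nat.add 63 (dig w 64)) (Nat.add (dig w 1073741824) (dig w 4398046511104))

def qeChk : ℕ → ℕ → Bool := fun _ u => rg 31 33 u

theorem qe_search : dfsN qeSt qeChk 281474976710656 142971416741920 60 585610922974906401 = true := by
  decide +kernel

theorem qe_no' : NoLM (toP (1 :: toZs [.z, .m, .z, .z, .z, .p, .z, .p])) := by
  refine noLM_of_search [.z, .m, .z, .z, .z, .p, .z, .p]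
    [] 8 1 60 qeSt qeChk
    281474976710656 142971416741920 100 28 qeR (by decide +kernel) ?_ (by decide +kernel) ?_ ?_
    qe_search
  · simp
  · intro h hb
    have e1 := dig_enc h hb 1 (by norm_num) 64 (by norm_num)
    have e5 := dig_enc h hb 5 (by norm_num) 1073741824 (by norm_num)
    have e7 := dig_enc h hb 7 (by norm_num) 4398046511104 (by norm_num)
    simp only [qeSt, dotS_step, dotS, tail_getD, Sg.toZ, Nat.add_eq, Nat.sub_eq, zero_add,
      Nat.reduceAdd]
    omega
  · intro h hb q u hu hq hF
    have hq' := abs_le.mp hq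
    push_cast at hq'
    exact rg_of _ _ _ (by omega) (by omega)

theorem qe_no : NoLM (toP [1, 0, -1, 0, 0, 0, 1, 0, 1]) := qe_no'

/-- Approximate inverse of the quadrinomial, scaled by 100. -/
def qfR : List ℤ :=
  [
    1, 0, -1, 0, 1, 0, 0, 0, -2, 0, 5, 0, -6, 0, 4, 0, 2, 0, -13, 0, 24, 0, -26, 0, 11, 0, 26, 0,
    24, 0, 13, 0, 2, 0, -4, 0, -6, 0, -5, 0, -2, 0, 0, 0, 1, 0, 1, 0, 1, 0, 0, 0, 0, 0, 0, 0]

def qfSt : ℕ → ℕ := fun w => Nat.sub (Nat.add 63 (dig w 1073741824)) (Nat.add (dig w 64) (dig w 4398046511104))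

def qfChk : ℕ → ℕ → Bool := fun _ u => rg 31 33 u

theorem qf_search : dfsN qfSt qfChk 281474976710656 142971416741920 60 585610922974906401 = true := by
  decide +kernel

theorem qf_no' : NoLM (toP (1 :: toZs [.z, .p, .z, .z, .z, .m, .z, .p])) := by
  refine noLM_of_search [.z, .p, .z, .z, .z, .m, .z, .p]
    [] 8 1 60 qfSt qfChk
    281474976710656 142971416741920 100 28 qfR (by decide +kernel) ?_ (by decide +kernel) ?_ ?_
    qf_search
  · simp
  · intro h hb
    have e1 := dig_enc h hb 1 (by norm_num) 64 (by norm_num)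
    have e5 := dig_enc h hb 5 (by norm_num) 1073741824 (by norm_num)
    have e7 := dig_enc h hb 7 (by norm_num) 4398046511104 (by norm_num)
    simp only [qfSt, dotS_step, dotS, tail_getD, Sg.toZ, Nat.add_eq, Nat.sub_eq, zero_add,
      Nat.reduceAdd]
    omega
  · intro h hb q u hu hq hF
    have hq' := abs_le.mp hq
    push_cast at hq'
    exact rg_of _ _ _ (by omega) (by omega)

theorem qf_no : NoLM (toP [1, 0, 1, 0, 0, 0, -1, 0, 1]) := qf_no'


/-! ### The existence part -/

/-- Quotients, in base 3 (digit 2 stands for -1), listed in the order of `cands 9 3`; `0` marks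
the polynomials without Littlewood multiple. -/
def certs : List ℕ :=
  [
    4344912081594440194199991527377418910891536537766360869169287187228200670747732014523165641670753355707834851680436261153280665585176586014707298129937710453691971889570908637751342412191664186873621516985954791573568358145843033753821640,
    4195281252030751486373015324346837635123023003098417989261464358281781544791215908507063666166391806207177678894833016743592828389852332438369420452940222623430843246198278767681871419187249388249381712895017974599179474973332381789438259,
    4344912082881261894398935456208652301521374506786450686968184687076163628792316055259028512764125631896608657607267705927655825456340118427524859715852328853389204052724226058468661641839253135324366183147801305041731164717679249931231565,
    4195281250729035018905672309728943044238212910179733641905963642829004314268111488811995269653744372845528881786034562046793101987219020657825463982719687717661027582720551736826182237821382626789248726541978059421880675983091469628813748,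
    4195281345010441460220724912529903762656156411784660511334681685460546459710173231183713895512186128643933187508024474977469912553189343265592607497648809014975587579907150103616782665640810168461278431376284290500699942744195399557873431,
    4195281250729035018905672309728943044238212910179733641905963642829004314268111488811995269653744372845528881786034562046793101987219020657825463982719687717661027582720551736826182237821382626789248726541978059421880675983091469628813748,
    4195281250729035018905672309728943044238212910179733641905963642829004314268111488811995269653744372845528881786034562046793101987219020657825463982719687717661027582720551736826182237821382626789248726541978059421880675983091469628813748,
    4195281250857835236895809775305329917239503139709384641375889234843585624338310245510847677396280569068965511507791487451693436748686437897419845763018981644575357072470034225454644220726952045546739917901081308245775197206657670646905204,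
    46951554372195489319157338030166370800740751321850169619694606027167517339577,
    25094116039753089764481268781836693692042089732140554802907149231980764115946,
    25104105672688066369523549327723186284973362263581056861558864366277197737394,
    25094114460773689202162556839945857465068576520335940541715083114331308053399,
    69991012724543506214801246590412103540659296060302877575317097058141452155061368128312430371417390114964309786146867,
    69990902824293022122336513831811017101402896892587953762408275300542857472262620660274784454467639646083542637701965,
    1599674620523398840111477921398855182268324597652495045069419733070583665795301504269494989980384280874312172098654270,
    814967674161935635082579645018501260481824895375400823317512471373194052295269000006745304159387809116120931600220992,
    50615371803690295021323172960296383862937492694182094601591836888333247596982613355164704731726769570098375007023680,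
    39846788717590245346642681416033553117338865154842030061146749800948348974128824447357223462059039837357382644517991,
    816163691355776179628746345401825942554975006185259481342699534803846610806739686628569918499935611506288605775205114,
    814967673411762007038714348455674991057158545622875770379944864543763122116367269395644574292063035991702179107077039,
    25094114630182340271287858219496558124407790509702421364364362510142397711288,
    25094114460773689202162556839945857465068576520335940541715083114331308053399,
    25094114460773689202162556839945857465068576520335940541715083114331308053399,
    46941564570090955331812765059356043480283938069550749518411886672214706522956,
    49547815949975303153926775031351151377529306153787189502882423722242408188935071237322612708664435734516620692476185,
    39846788717590245346642681416033553117338865154842030061146749800948348974128824447357223462059039837357382644517991,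
    815087439403878662118361242692470459951162144621422368351919977806691533814137970049241418653677525041553661481571658,
    814967673411762007038714348455674991057158545622875770379944864543763122116367269395644574292063035991702179107077039,
    39846788717590245346642681416033553117338865154842030061146749800948348974128824447357223462059039837357382644517991,
    49539120752201222333898733246335955398165703306805157813790070002786874409610014903826522645785936228909868921922917,
    814967673411762007038714348455674991057158545622875770379944864543763122116367269395644574292063035991702179107077039,
    814967674087844539768022657563069107513140385248570520363543615951765644031160179619566509899625971642688850972490567,
    5408126130370612621580992742462110469795651062727876917157091563197692096091,
    2720898053003363446999977598468845431385881675055161785129945875788688330553,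
    2990620673648678108373185628334723490654676567833848215020202580504850874616,
    2710907856375763925831423588490402062280587291146940210940423691203271171000,
    104996790296045744632966746445045469220355909, 104992799457641256241720109867348904857382679,
    1307134041819782889917384485202508970, 699144237933957271818218297886185686,
    131068937525271636392852292589294488149436379, 104885046820998198062653670033414172878734609,
    721302944187525109124485291233469267, 698763098506477390837288689745451740,
    11642212099303719426788850468265801677875777405309760262386697901788250103376461792947348077415398179955632622058600991180457750794929555710190842321161227148819816142167322855313412828679840071808,
    7493595447730171508346950979005328689454579081382504246886821431964070737331188843251077765151445579824233148938987196147038142963228984865735603816562086450320506987752550801736554018862863533816,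
    4912746262431793291279379759577769374784283988883613024093093411431806492192910593556,
    6793684297742448541104987240390845845243607561789158083896312442021550249753710564598,
    6955786571474363748189115, 13177893052309650958094188,
    6155555177132590656734183566843504142268681068754650816730883612486616914013590581213722799996142850759507782631355709203119949949023233983285963769641176901749216350931047089371103953008140669249,
    6086945834512996605989393931641002126367456208287006585987692431307238497896888222748585564230917498068160307417385855706822597906379193255210603497116737048882279006402641510199498888761841920244,
    3867805357935608804961576269561531780554929863042939169500021571080194114998300621424,
    3867789431144149788464598389950414513131344924322840576981467839718210688768462835555,
    6717467528836309207493203, 6713528376597103120399573,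
    5421443497743108075778956070028130080438189373171727734811876163386768900708,
    2710907856375763925831423588490402062280587291146940210940423691203271171000,
    2710907856375763925831423588490402062280587291146940210940423691203271171000,
    2980629468232159408011569798570541290596166588259317211020931740757912228538,
    183436718933787611989066781414936187278861095, 104885046820998198062653670033414172878734609,
    766627574802140785849445874330187087, 698763098506477390837288689745451740,
    104885046820998198062653670033414172878734609, 104889037659392385402618765901849060076533795,
    698763098506477390837288689745451740, 1307122977203487290013777838867426375,
    6087615148841873404710105541626335953641215629978436734386375776201873011270458971667216647435571676193892410809029351179480291035005797707862028925148710458652498332568166395477620784799323077436,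
    6086945834512996605989393931641002126367456208287006585987692431307238497896888222748585564230917498068160307417385855706822597906379193255210603497116737048882279006402641510199498888761841920244,
    4808266510463983092803890718400079268991473494015777896019785449735528002570695624283,
    3867789431144149788464598389950414513131344924322840576981467839718210688768462835555,
    13174627126463073192624988, 6713528376597103120399573,
    6086945834512996605989393931641002126367456208287006585987692431307238497896888222748585564230917498068160307417385855706822597906379193255210603497116737048882279006402641510199498888761841920244,
    10270074792434310936016586589528507783179087369701010641121642632083289660174851377801617861667712296339052683129001853832992377644131459160364153168519973427940713018412162515104809967326333415867,
    3867789431144149788464598389950414513131344924322840576981467839718210688768462835555,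
    6689172692911333722877698184143705478460012031962709225284436404269562487084496298347,
    6713528376597103120399573, 6714517668876183592745662,
    42396321973061816678270571815622279429766021624255951986478915148043786956036464831214829920231071602980263647578663447999245498363490185788751537967869439339728651454722737257718547892776419082951566433,
    22716652503747242471893661335229902128632333793442443896787174305285833968336284694457565921751756475144115406425442303096908234587368988980427949483961331067504618339066425686156292311468110701309144816,
    42399321307873780578885161700774705689228435889368476336583857497446851275823245781767827508979452707973492868279389519341942397934449606708701849176325969371188810844667187912181349626587412905174884740,
    22470655711519086529942645626925873961662295709805087890972863012676012702766170078139805746757144722272547098011958666247897226634595415170369766433672191349050153660812754084932038631132498482572572657,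
    87809017925262424759510036637746050193002384955735522595274479437168092854615166399397979909026417996402015343316166090612860185345855827034289561672615812550674974432329469,
    122603077971097346894570209236864949051194532598405004401187114528273344727496325871959887612975968663766444600830151454347732356042368964394872587928053484986444996153930644,
    963409093868638984678600049216665075105531357562544527600169684383635089557791301906128569658882447469923529407013395,
    963420360107173799387808657194582513469692206630029879212647654436859883378508122420694243173240064982470671998507019,
    70376173053800936797743470623954489081425302179217667527888588646182089115101266457306542560064450001402908833533923160537164946333932726000951071624632324801589518593256957,
    70376171793939323253037177033043108202730129398840507995682525567448740295318624707014040683810241861644600831821467093459710784312136170678419035263901078303786344173550508,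
    966637847698587588251750617762794509607761217173750723711000836452334927468891572565002441233967650823713970532616509,
    876217425842294676845163339212810469473033565365755502091260638287918013418322676517565301781740665475838482273806661,
    101151132350475585591121783857049186396057962944870551346103693022428372109060480179311979246494267839740547658219309678109313664572560092168429721644206907177182050318194902908659206088242424691504901389426578367178166930533624511649536182,
    52670808332025956464837902346924019462348112694299771651497694373740937595755086510404602524186041312479184214398870446351020642378411098847217603591745218812011492724951555522955231642611591999571990509046577034968099264806366348621640155,
    3101784232, 3101994220, 67420469389, 36043655440,
    52671424093290666173217129437734127539232015367743772139017219763331339411781825152796743722944085244550758504093699955806392383374715246185382866338300893101419499213278506269554615456834191652249223858925970330210917193591089444843352969,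
    52670739910245951908730330516802844529668681287524423992740152285057905278003686257793071697895652656214878886873343105019926789504279489512173049121492859564237016201234529869076664591867574341206698378181078355275626666887068112448496973,
    1554435076, 1552073116, 36039639379, 36037277419, 397776674478631, 535319471853430,
    1159350119235651814153914220300680850264141624037022622365921281051820855065705080547596471675000398949380081936067759,
    1417726751240199849418614234441005076347797835243694275464893946144464701580706136489652374220099128582743722520524646,
    52588557452252687826562864678636384747170834481587735811,
    30404367612595927375491433796758911520003839708458895349, 181079202547179139936977373,
    181079310665143117790769874, 611282604662230, 306258656881936,
    2192710789441939882602298756410626402426646675669958184977566752776149701172841004108408355825746298455297314831877419,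
    1146428681165318614131980717774951405296075876259040698472261345533421776944732742439040780482596855798929792548060919,
    30403240462872620192036170049672461653142173341850874468,
    30403240462162729858388012404410098935134413504806410148, 187460480219437078757952142,
    180999398279971992928267021,
    22470655717304251399040268134968882879001983220492245203779832473930849431332664570112705275836074651010892660844009830374478160108858502632586646018300443841676676871330296327728180504816278427034329590,
    22470655711519086529942645626925873961662295709805087890972863012676012702766170078139805746757144722272547098011958666247897226634595415170369766433672191349050153660812754084932038631132498482572572657,
    22470655711519086529942645626925873961662295709805087890972863012676012702766170078139805746757144722272547098011958666247897226634595415170369766433672191349050153660812754084932038631132498482572572657,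
    22552655566822094142808164510037415233122240336541688343861470421236903869111777309404048437982814416256821737577495965009145300267043941324808911609634874407690000679254039318303978667262872206194866128,
    70400052405013111062297891847297326507784602343394365078226678620007260595872346763850311599580406371907765280789158139869914599630543962616312407383221198627875472381232001,
    70376171793939323253037177033043108202730129398840507995682525567448740295318624707014040683810241861644600831821467093459710784312136170678419035263901078303786344173550508,
    967726018763850551827299338902918137150752864274620497736523422104293777990319540454090123581013893477440614754345997,
    876217425842294676845163339212810469473033565365755502091260638287918013418322676517565301781740665475838482273806661,
    70376171793939323253037177033043108202730129398840507995682525567448740295318624707014040683810241861644600831821467093459710784312136170678419035263901078303786344173550508,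
    87785137314193487743842008429783855935977685183224834680229949202029371525692291859578988542417794233852741804921089506222075222124047854787256339703429405158572305893334547,
    876217425842294676845163339212810469473033565365755502091260638287918013418322676517565301781740665475838482273806661,
    963420377686179676495569551097051762443504186955706779866767957197551868977700525947493616142651500531766773214636293,
    52670739945392274722219523615275864342662415057397493687859055799657636326435972348459945047604701495714263806178871610504579935621507973748660742856075446826843490751926945292543254038363909445131879606946234666451718998544956149280533267,
    52670739910245951908730330516802844529668681287524423992740152285057905278003686257793071697895652656214878886873343105019926789504279489512173049121492859564237016201234529869076664591867574341206698378181078355275626666887068112448496973,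
    1554225124, 1552073116, 36044448592, 36037277419,
    52670739910245951908730330516802844529668681287524423992740152285057905278003686257793071697895652656214878886873343105019926789504279489512173049121492859564237016201234529869076664591867574341206698378181078355275626666887068112448496973,
    89031648315535090549002099919683123074024009491764625129794625152855720164266836946552552757660027463077722977216703392400496381488738508828975746603214246737671666152760443397287318156735381781047580425858708267473629625213940591303825377,
    1552073116, 1552309348, 36037277419, 67418573251, 611282604662230, 306258656881936,
    1146430175958758530626044235320929442936791230995301223285906056853327355877790270262506045462791367172071669901361976,
    1146428681165318614131980717774951405296075876259040698472261345533421776944732742439040780482596855798929792548060919,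
    30403240545584619388391534252896417712759118552918086722,
    30403240462162729858388012404410098935134413504806410148, 181008698944088284769340778,
    180999398279971992928267021, 306258656881936, 535319471853430,
    1146428681165318614131980717774951405296075876259040698472261345533421776944732742439040780482596855798929792548060919,
    1934365256507631726041914937463427140700708566542245984859392192778158184661677477831188359339809372438745537561463111,
    30403240462162729858388012404410098935134413504806410148,
    52588552825873405740154081720996098652283982240782300248, 180999398279971992928267021,
    180999434803277829391781566,
    4990688466475237986519373306913719528500691091058902370099414275679423192687097307963086306575277671046515798671145148492352914186236846582327839805052749867388673428486382489913126695714624043651122924988184545734603841945387757640572033,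
    4991279746065154812009977965979681232383892305181785230794134780392288568559807596850154967431201477486072879496434690743203898025377788631328368987470737630883554994634043364315630924298961748585410278711850660574719583770157338862344060,
    8582238635868805075391868915831515388087595403783074522054101041049171628320015126598210275584733182936239110847286655333618944739530625579570001966593443158793836220890165670188394106143449196979095978082140706105585954976064246352704389,
    4541565098442803678721332863068058200919267692880959023824695182733131265556362777399542732901537886037457355936131033185655295100791245299008878530136039863786527758557525014857452015444722676888027741747850889843960799386927589372400532,
    49749158798749413911766262453691739047768668371587951446938064795020436943389233745836427800369152733670576545885703361711585853436571970935141866229246748759450634230979710526792065803928243973456902093997763877974253574810330644961736449,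
    61286940559818278508310464034275620434339385489592185606295461374535735931874261193603589640702703466367890144417355079323152715910600135653743605747988925967453355010258110885372221932700246273333986317115099792961030395799828963273846755,
    204387935443843349071296566265850355476217247835554598,
    102946196445436740501249000446840053222471304505121348,
    61419806090643079055462974718303098769845850704789547059906380272520697812914246338109524785075887348795887538083699873526509508542002019236523987716620623631947768067659981249571647774704660975402182810282419830098396471285105802080521264,
    49148162250692705511009362725038647969231487955389102733862439212078049558796782245362523445443591925934515260438538661673359715135311546092099980716037622060683381522181303471225080128566459325083688814336827893615588650308561919576841031,
    102947737053197983066974174130384396420224618224962225,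
    102946170889850313527423891238372381103743629099588200, 13, 13,
    1084926130173291982092531100889295848594763425458863256307605705080663511909297246940154662788861,
    1339488050924930535606106036851619819889339356946933110108775986917810298149565429239057293427661,
    27260328719687972568284685027244121183039187076808075095,
    49445641058173851942740064576968396687725614839634300598, 13, 13,
    1881646645494696969528367096438923410949272416718341439971685252194266860310617762776301956447612,
    1073874062040556640661248853155514783108920932763171771913227920208879777964118374033734088685465,
    24795546030164605328949825576490521480663688843986122395,
    24783897407977296866129038443011735336575309867135581676,
    90363772025553334622224656509141954430238966613824379003305453326107084565223527209143835311631216226123762054361713911006741711816775172766170110420150631404790763998714186779008025910564643182435428782312260629983293783672961305971775711,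
    102419213713300427542610152495592367321740629152937207732812248057402710541736290661893948611124524618733175538056809320119190492527163341769566466142820729312526852229051024816630262385429848426080855473550053523346436759080636187452298543,
    5273858562298357224961606, 3359459898173513270494120,
    266586114044126350605765212925485072089239171943150548505,
    266819471679636482943278191586976648741732052236313965043, 22499689558, 13575198658,
    67453241336161990207788768582938722557489556846079276943570439977174002834934051413289061440656099207184966998499672958826218577132060437861819700366492341964198360834408808449238708542575867215744289101741192512437837418164404748205997388,
    53936361498176466384058871321656941259422961462954978546659826077836164106329791789062622559082667365457624148307557030103014025325915649890142050100040901480198239553679386893382303372711588527938347448968441725568104954636857068872585557,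
    0, 3120123623354318978633236, 266850238153846517418739537719779878776521694382651450966,
    266542155777117655899550018064200304725537879344551467495, 12039398806, 12024984289,
    10913737700869098124224284830788153339513665452886563234802122933324836494984572862702590892146098265687831795504683474103760543561091684801779459019454326671365588212996214705865954678611993057789,
    10454686897607618228708223046724516014211199550547139701200048531034029103898234020160507600317848267543581762222777384635000103997460055994315262164915091424931974488652596441162300600441114726956,
    1545335584566395194749948259415429234835327443797820788563291110233261646964950080708397907705502556784331005807141739,
    1984473029729082326238030434740470946196032208132723957098499159706684870772268679757266156004218674659964094567470278,
    125088313, 77789986, 245775223226211551377278475, 413999697379034325943960207, 64056496810,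
    32676618172,
    11786168502715462684020252875785296891351934564695268462310133533747790571623694539391501861122641835924558797716877446265982370450619934788872659029447156111757743279814035359990295039774915197930,
    6231563575832476678438866250113480765232804742138259551396556390350148948040808972266053778341140344831520530546503719002977940233764471736352340949038378106426002752762640570784322775583660651292,
    2040327013517022702205335555685943957949925119013183081893465230393075222502192957197666921927005474306219055953038706,
    1167354167158228358495028264945496755867402056857353587808220084911483442707884006400152920691258053827667757386811557,
    63639850, 62909392, 245772268930160121399971953, 239311187023980894072762271, 64055908417,
    32674845892,
    9032339850555892423518608189157188760053686324340644806357869006142237817937357203041615436646607495783790175395745149896834060701308092892916130171665124965395421641486248944785155916990534796407149433903598302753977785918585458188268981,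
    4541565098442803678721332863068058200919267692880959023824695182733131265556362777399542732901537886037457355936131033185655295100791245299008878530136039863786527758557525014857452015444722676888027741747850889843960799386927589372400532,
    4541565098442803678721332863068058200919267692880959023824695182733131265556362777399542732901537886037457355936131033185655295100791245299008878530136039863786527758557525014857452015444722676888027741747850889843960799386927589372400532,
    8582418572294629298584080164913055711453242965615685612418271344504847788327173298420471716517083435994593984019025164587065012370815694984624335089017012462549243488638483317426827575623218699581667867677793808956088674681633095670058817,
    49200580901309569300591852688747337625612165985906425394261818865631192384397616418965424213308496994815330707971515642759989061571197737134731705720519685714369606725707247082338666039896003510731567749272506350560373908419802848927855249,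
    49148162250692705511009362725038647969231487955389102733862439212078049558796782245362523445443591925934515260438538661673359715135311546092099980716037622060683381522181303471225080128566459325083688814336827893615588650308561919576841031,
    102947742787360979183152224672500980470028333963149028,
    102946170889850313527423891238372381103743629099588200,
    49148162250692705511009362725038647969231487955389102733862439212078049558796782245362523445443591925934515260438538661673359715135311546092099980716037622060683381522181303471225080128566459325083688814336827893615588650308561919576841031,
    85675334173540367416172209846036877619249837401387066814075062188683919010737775539976226910984861117654535891717081026604535707496656993830631839660581036344941851056523412799368772565479964954776506690955167689530480982235916873056512289,
    102946170889850313527423891238372381103743629099588200,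
    194243772376169189806965044526048748990264011578608987, 13, 13,
    1075088575021346434780039371802684733912996006819560864321775953634596536235963693650503614325902,
    1073874062040556640661248853155514783108920932763171771913227920208879777964118374033734088685465,
    49525542048029600757617844466267107304292470794584728036,
    24783897407977296866129038443011735336575309867135581676, 13, 13,
    1073874062040556640661248853155514783108920932763171771913227920208879777964118374033734088685465,
    1339852404811055141527849628596808226228907790791222177368617188924551000400519361429037158949793,
    24783897407977296866129038443011735336575309867135581676,
    24875695993935426354220041233446251442823953285929977398,
    107803460865189991155890200003401114823410601724711501816026006843134448805723377675812755132136821336076675085691063416411774199215224004609886923552050449156466061004973365657142811890965551994887896501595175625720773677079745918916301089,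
    53936361498176466384058871321656941259422961462954978546659826077836164106329791789062622559082667365457624148307557030103014025325915649890142050100040901480198239553679386893382303372711588527938347448968441725568104954636857068872585557,
    0, 3120123623354318978633236, 266849904186909941815020221992782425179525547621335708345,
    266542155777117655899550018064200304725537879344551467495, 12025046254, 12024984289,
    53936361498176466384058871321656941259422961462954978546659826077836164106329791789062622559082667365457624148307557030103014025325915649890142050100040901480198239553679386893382303372711588527938347448968441725568104954636857068872585557,
    57993088271117440818411709040987084657279792205509129420337087294734783380587712129337008977272078707371373474254215834989970107672867202006477026820309480749354857639233941130778719587129007543019150301854177530772193610940352358343672274,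
    3120123623354318978633236, 3359459898173513270494120,
    266542155777117655899550018064200304725537879344551467495,
    266545662408126236901609551579586874505197119071742492787, 12024984289, 13187252326,
    6232292600673706644334489916650292552079287195007059136741722200659862825800042119533086823373158317280426033760984364967252750927740875820520963793767907224971112688426463920457294112078012616584,
    6231563575832476678438866250113480765232804742138259551396556390350148948040808972266053778341140344831520530546503719002977940233764471736352340949038378106426002752762640570784322775583660651292,
    1286955877863333971190732788105358554700892836972919771644210104833492774407911818759590426321453463549412057488182589,
    1167354167158228358495028264945496755867402056857353587808220084911483442707884006400152920691258053827667757386811557,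
    63639850, 62909392, 239314141353435798850049695, 239311187023980894072762271, 32804008654,
    32674845892,
    6231563575832476678438866250113480765232804742138259551396556390350148948040808972266053778341140344831520530546503719002977940233764471736352340949038378106426002752762640570784322775583660651292,
    6700232491773504999191833514081547442279915754737628463030002134910870898960035881100156828066939739164094242750580797091055551943361725459961945665824623162905136648578142109336169644951131646181,
    1167354167158228358495028264945496755867402056857353587808220084911483442707884006400152920691258053827667757386811557,
    1257894152418703187986168638479988894886698139976315178165878527266411084147901622846046738952014693557446567022878825,
    62909392, 77789986, 239311187023980894072762271, 297460924027237015888923706, 32674845892,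
    32675025235, 47426440102133758607935999979799418731937253705896848304,
    47435568469012707992202017631087205397188761983937096586,
    47181963923268272294440036785055912436165070552642651304,
    24966089156490693300411755325175708320082493883453514105, 523316623, 529514905,
    969184900092760754503334150494449957612796883808627152876401681471858991605872518143865319772468033791509000171888164,
    1676425217534748583132340353408877995584559055517965633113420565551848766378589118264084013689484834619890898412953704,
    527940022, 523137289,
    969218861068078598128334411328765222832910088654364568065940413905176549323041972537916046920568437632583393240245283,
    881989296583506749899283806314236178953936689015216512007438703272512330815427628617058922029364904159430405558744783,
    88930740631759850755338371312436564800553793879116477839132799891391456299399530095180090479125485605755180858091038296642958366202199999342286548332249955237409167799954966208483770583851815661949238496210934752754958033106745971812640005,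
    88930738127836395780515536738195896245162459320247215157905661954106048361159030368102485533560371929090395620238891089933998589421092173926364582273397198350952472878280744572781670028947383653002744181466379590322528629479899856490151660,
    19636672, 19634080, 250718075050039516840915119436815560678916330396548910235,
    227722229165720111564382406936678336290084042630936475009,
    52570385484540584911370107611427203113905359825476823602652531517685831627651697098709030709686095098917217132692431188534010695326996094366388454189182367404908020787453155846774904665021631680838509577920365589758099318383454027033841136,
    52570377871945053468374621048565079743619446709139191990510041125848982248297474810717561936127101907942338774660845089647434230640802540086042829953772150183029393543681447229085357173994334016937049152882447277026073068933396520996891943,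
    0, 19397560, 248254037676925623119846531999056033643420874777249624574,
    225245918344114841906153650818435736070432703836794957573,
    147060939220288000186906437458000134917679709964976486541932683006313106855209371664141412975756757750213135983014600974733914210186504389192741417230534974017271199030834813,
    83204186714226224079109879506737153577179297411435408175292939743571137791536933866029720434971807673578240631849619719105240594617798751856602027969757454546061547781328255,
    1947959419459319045791991958844208784371384977815977117293599174888014077620864553627216557693418,
    1948080870562713298005730347788291594625652476077132733310743926735401750994790382986397554280222,
    716692, 893191, 61595251181328289, 56038360499535946,
    94812532908006469205921773554553202094066024778451131655170937398803578899374879558145849085777888870828774549732959912603329518354042177790920086192343502292266133500333079,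
    77400903521587738698097349245808749886769167242638853519654918392935083040727459757407519823061467510649652221445823595420818839380120286281830661448868132802084392943673316,
    1947960900144105267461020644946093004347948320808773337582633438614855813039215108338508164605322,
    1151117427921655338553878678331974141640792020697550451887377995679410814243919750904466469389531,
    899671, 715963, 61411958370915097, 55829922850972777,
    152352431413190021388073675550801558754819577, 121271781737827488429266488588985543410785547,
    3276093928, 3274178116, 489876276253256319856464795932007017786616324682616564272,
    355942722347137920972881413135119413100274699342896812785, 4, 4, 358502370232, 357467654362,
    146522068139079845012462774210335956759174679, 117392489730215251120595306311040023856627305,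
    1898598856, 1724259964, 489054972125086175834299454847700130155870772564420243023,
    289356352786048389837060819453156268510264881249761406463, 4, 4, 640159788307, 325956923149,
    82782225825119457513237435657305275517785925543653103444979879085321258242181092731734609290453066809576179479763297,
    73094433083459690891236548325789108381311279981616163854166011899410850722932918997681842382153734105803476391300169,
    5477749498520835064852911642932264369206342324921018138718621878719812130385156650961,
    7076098348369944814678216589855216368952983857407480770466514081919339509650826548191,
    35553124543425614968715271617408826298339797505035019417,
    36281250935620079431802791914370425843375889308295953451, 333036179813972730752492341,
    431866909503612766870150432, 1030, 1735, 40558, 40723,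
    73692441605307463502645579781774350689713379879929198295451763079925005078266208692149174931411799139391133069175098,
    43552812103987626099170022024822008397471871499992895548118916367664880743656390697977606831423862809172088059794639,
    8016559435355949601980958054733063316116611463228167979137394706346358044466826368404,
    4219883195301337454903095494797869597186549834382840564320872393454205590538099657089,
    62573827324299339467125571954629799100467426457557482105,
    32993410349424002990137217940231159009922601746672185004, 490015552216703505013632766,
    255183142397294056431279829, 1975, 1003, 21739, 20767,
    24977505990210619966566577532201333096831284780974301444,
    24966089156490693300411755325175708320082493883453514105,
    24966089156490693300411755325175708320082493883453514105,
    24996526323052744405622986140961337932600396167665021206, 527940022, 523137289,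
    881994279228618971416564909990254419360632521964800708428984346046055816873774397098327557531800239351529809878110229,
    881989296583506749899283806314236178953936689015216512007438703272512330815427628617058922029364904159430405558744783,
    523137289, 529514905,
    881989296583506749899283806314236178953936689015216512007438703272512330815427628617058922029364904159430405558744783,
    882392400650668127158274593011683494146870854953349284559439608039396236627576837106841475376799903492696188101827670,
    52620254827187265690292342198879245092519113567329257508785610234226311447773390476998208271923537140481160583111117995682850019313253255604709595777151839449981464849412910514809747223278467850881585616636693002704489476519276879216109791,
    52570377871945053468374621048565079743619446709139191990510041125848982248297474810717561936127101907942338774660845089647434230640802540086042829953772150183029393543681447229085357173994334016937049152882447277026073068933396520996891943,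
    0, 19397560, 226173672097925108518990254110586683917049999974623810415,
    225245918344114841906153650818435736070432703836794957573,
    52570377871945053468374621048565079743619446709139191990510041125848982248297474810717561936127101907942338774660845089647434230640802540086042829953772150183029393543681447229085357173994334016937049152882447277026073068933396520996891943,
    52570377903276831436005781304694439560197881933669987221858772291731769787097804359182363769157429772879876271510418783687543393179992014217015603566738028333035752487300303581813715771816288639909522810285301831782400737731314696649452363,
    19397560, 19634080, 225245918344114841906153650818435736070432703836794957573,
    447109190610845090497206281969133175521945834313360994422,
    154774081609466163880497985806090345976060819032886800958473363222255420141427333766334121122769315041854828575667266606909533873041827951369230642637153326230256003568534777,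
    77400903521587738698097349245808749886769167242638853519654918392935083040727459757407519823061467510649652221445823595420818839380120286281830661448868132802084392943673316,
    1151240378618466906294844228151312354607387937563758398140501636825416397029511500534157920261650,
    1151117427921655338553878678331974141640792020697550451887377995679410814243919750904466469389531,
    899671, 715963, 111420532433779618, 55829922850972777,
    77400903521587738698097349245808749886769167242638853519654918392935083040727459757407519823061467510649652221445823595420818839380120286281830661448868132802084392943673316,
    96745082506871132097475716079079564214917140247241495260358121237717092699369759985514683125735633936078537836804067345283437339555549636584210740571933386780572599902528354,
    1151117427921655338553878678331974141640792020697550451887377995679410814243919750904466469389531,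
    1151117927975172403393206910546021493687585867067480240020283309020191430330708501176129493780542,
    715963, 893191, 55829922850972777, 55837549740036622,
    146486201821896056266719257520061143069307348, 117392489730215251120595306311040023856627305,
    3446128804, 1724259964, 355912291423312943611416907662591364696813548986273023840,
    289356352786048389837060819453156268510264881249761406463, 4, 4, 338096098714, 325956923149,
    117392489730215251120595306311040023856627305, 196926057926894180645757657739259364987322411,
    1724259964, 3274181032, 289356352786048389837060819453156268510264881249761406463,
    356764776292336553267443949929600336630684401789220855651, 4, 4, 325956923149, 357727174717,
    48217278574433798967205340268234008852916145873796998513690484035945563565524387584161634830569505355558345258139283,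
    43552812103987626099170022024822008397471871499992895548118916367664880743656390697977606831423862809172088059794639,
    5266130028697291281151255876109873994343259800885649210883557480156880392331696886708,
    4219883195301337454903095494797869597186549834382840564320872393454205590538099657089,
    32997918872289573384880736271849134488758336532543066309,
    32993410349424002990137217940231159009922601746672185004, 507175293260735888379881206,
    255183142397294056431279829, 1975, 1003, 21577, 20767,
    43552812103987626099170022024822008397471871499992895548118916367664880743656390697977606831423862809172088059794639,
    54317020185189722191282883735104970793096443647077104456367470247445316543037506545645401125322652721134677311044348,
    4219883195301337454903095494797869597186549834382840564320872393454205590538099657089,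
    7356091532333174594307592380011591537743426908840347080058702624728677169216954944340,
    32993410349424002990137217940231159009922601746672185004,
    40391895856290315834618533389589694523651759486966266088, 255183142397294056431279829,
    315726200999710403296900423, 1003, 1735, 20767, 21013, 820, 820, 820, 820,
    52405953574845080277558366258364517870051119838091567973,
    52133187958369582554250631210089510546116995058854478538, 1309935088, 1438955704,
    52405953572724184736415971728024345922473328778199104412,
    29946748425842055374597550574965332556547771851425072881, 0, 1308141748,
    7195223759561660546567299008040986886754642466938865872871044934161406120197472455121574038475111405201220289653238708514262923367059922131314692306011059427407934661401490130497305028288959734668061229403350158647682426025200580426699417,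
    7189686913691522354660621879701094643129071435184633029368169008712876717362331530203889000586048886253215600333713512303588998649347678403466897115438352017503765924380231680601238289838299832433300314826497524408754857476943640950303217,
    1324641376905642974411703899957133675335978889784074961765117636064019735238355849918278216898147441046333328126121752,
    1844783282971712452859638524000878878625882253858026250548095299960599853135551706782639973726273706145580294931689679,
    91, 91,
    9888583774272657210401970119622519743526763357512889700520235191473766242494983066993850880086440506021719446009864585806765347095175840851397977823772706642113566589554873413198941366064412675487227144166736963675611700283288743577498243,
    5843001836577790547172937089624159136277540594718720332624347222057222381545384067274722084871886896503604590453158449402589695540430733973445918177683866152674676205963513849147409189938408787079707412955964840611709966577987905209552924,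
    1331333494885480960653653495851087208845488984230085917686183633370869945892657756211881999152921603907263201397252716,
    1059717531397248711992665641592663639994301298675753437836888733724662226152292443269921976282528180196919377712024605,
    91, 91,
    36162898805370977308092079041769016598228489455049991143387238606282294306243616559074932154228068700035455721649254147691702038729103949191001517267398630318088310654218230401672229577672747938697346620,
    31734981596580170950136208126164310782749350155224262794030087133410206152612801702955821022168862904859962326799274890182312486639151181864147148851288982488154676440555251665122912462952676834097474387,
    162446320842323192206225782443825815208970412978295341,
    162460064234782625645616366500282212018162107962742658,
    339133354651280665319488130932524987865962417417039105772,
    337236393785673520267055680715059545235061210571726288160, 1823077, 0,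
    31735881454071129793094279478455926715470682122957337003232951270913042068540770551251735257784733365420230278362849529111699555780458039071903896721934579159519165865746002943676544163563415387193342456,
    29520910529567423576235011151450649626541618572889867333619130150376171979190793372868036411272295580472834369075595856619869765499774809911457087049537258927099144973267517492597478478381239513403010481,
    223311203510346054229093191953911549963377937328712139,
    132013615456362665870942612896293511704260677814492200,
    471991615046586807083030020504177821347178142674546394759,
    269828332074404910840005061381266658071082685837430972869, 1981036, 1800964,
    6324320853683524782136347529509050720445860384755477351126724595489212201326,
    3926394522914076396670869784022379672336223391425801637654764894924447240876,
    1425005787704035106782103429718828500849331388431651711007489748196796269918403327464213286584844005695180661689348113,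
    2035094069472573292603797276626756577146263450674397345504605459142261628354428905487125195640956137706042909309912895,
    39464316836330268075436091070579427726292308336919226994,
    39457512306897858995701675513376681832166617595584168892, 117367867119070576,
    117367020074580391, 10, 10,
    3896456432983336562864173843375552984781889841311885384053028429822049435576,
    3626688623475725328384168423985819077823048216463825638552279325848384108840,
    2035001039847749220831671652658257010334980349074720273218331779956095307928258517049134388230009722501835962616958335,
    1163064747750228102720015912399552287802472602959096582337156223765575491991449791055605962093534572890352228621700823,
    39454134064513629582380561681553215359023568172516903332,
    32059025253977571512066706752177420208363991882078886692, 117992322168054409,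
    67335192115380163, 10, 10,
    61949507704364610325796716071850728018150416320487876379342420644882499264889,
    40821301569212467973583548360094181845178294611578155049804852279033160727015,
    1524725483361723444733241959231375690, 1179290023166537974999025417906367742, 57046208887,
    77965019164, 16350157135, 18679305574, 378948141928, 377786945305, 2818, 2800,
    40281862919501620141358143028194212938037908084621822032909032063009899599909,
    32729612285370675576036366987617364500166051393964448698797379497999886331023,
    1584794305197278746136970509694905452, 908938885165256618896350012187704220, 57002820967,
    46540676611, 18674502895, 15173369587, 378992135368, 377785171621, 0, 2548,
    10253100580621328555624433031331042741791824581967595454667774604353725707102754926573444791370218357166849053520836570089893302900117388682469967295035860078987106180596545720087399294853117420901967490911263741110827906515523469927705106,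
    6523413591900387478605612472258325318528829818317205966581763142432728110851717084529765219092459404297767648434876013559760121764539492173643946402989742300396883749400752534392778941609109232584823478887672645548156748718109559564728613,
    2050933515990013412304713582030465008221801740159303321036704532517315848458036545993463972984274373559307462916912268,
    1989576352248124263014812345707539082492089766269458979783973354304184273314373716976153137861665348047888561570988517,
    11894319969728397343723612, 16361240782513670808645610, 440133694253335695899041264,
    278606647369183641843562381, 80688057688, 56278972315, 47818, 47251, 1, 1,
    10602238336739128218978301263700736520215121125724015716846184076838882211383656634271055302585724417925535156489525796405990261296961522330479364187315763203551583160849417864590576712303319947420897076587922403210957948641350595677872527,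
    6057894597538367213421900006495976632449235241499228729013106887441998882110748267429888062854634957571748211438775924846450752643279243461765166384126164873744089092804907889597942655198203156110522063961812560083097247963332181913833916,
    2057391011497771000205989451129949136777341704630451820861400108183808938151230916419464807744486566112181261292051154,
    1175806349635166417757777370605708102985247091971537855695484221140185629946409547500683749228453864495380652633751485,
    12062644198662586674331666, 9660749994285430325671117, 453038204947901953325048533,
    259196775911908640359081975, 80644026574, 45775395244, 34696, 27325, 1, 1, 820, 820, 820, 820,
    29947875556479896283446391026097080746389939228200920528,
    29946748425842055374597550574965332556547771851425072881, 0, 1308141748,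
    29946748425842055374597550574965332556547771851425072881,
    29946762341038024509971036883588669807481683661701238579, 1308141748, 1438955704,
    5850391013391018643743378028965961843307326713935859519894007960995295728219305819195443406931205582643090884975199695859543735674265681133629004679097354482910630008081612141714020170728302572787678511870935675840128014232636838540824350,
    5843001836577790547172937089624159136277540594718720332624347222057222381545384067274722084871886896503604590453158449402589695540430733973445918177683866152674676205963513849147409189938408787079707412955964840611709966577987905209552924,
    1072674547441899280470761594126501067073772415348733182017396433280203407087469775871193022912709136359669038038736099,
    1059717531397248711992665641592663639994301298675753437836888733724662226152292443269921976282528180196919377712024605,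
    91, 91,
    5843001836577790547172937089624159136277540594718720332624347222057222381545384067274722084871886896503604590453158449402589695540430733973445918177683866152674676205963513849147409189938408787079707412955964840611709966577987905209552924,
    5843011972623054746167241218683818544561716615390141723659705261985752250610106958454909115415469270313215274095983606661135446093105351363911324103864033605159720210189786584222335407119979227555607777391601134903243090269111351866219856,
    1059717531397248711992665641592663639994301298675753437836888733724662226152292443269921976282528180196919377712024605,
    2106511515314409094986990535330299976513178446313403024482542361053200777612795066043140117471568511868808636760684122,
    91, 91,
    29520911066741146930740333109376283124336691651307542039412958232112752515088112288673443809904685294894583931336177253235797160934035960165789020505641064439643736008031910334614304270479334108904530975,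
    29520910529567423576235011151450649626541618572889867333619130150376171979190793372868036411272295580472834369075595856619869765499774809911457087049537258927099144973267517492597478478381239513403010481,
    132027708804615225440071004070995725892287779443379325,
    132013615456362665870942612896293511704260677814492200,
    337216105436313279040229307862060183500049072295161703047,
    269828332074404910840005061381266658071082685837430972869, 1981036, 1800964,
    29520910529567423576235011151450649626541618572889867333619130150376171979190793372868036411272295580472834369075595856619869765499774809911457087049537258927099144973267517492597478478381239513403010481,
    29520910994356035254631507339786883562413599192175457427531234850538614512421338836094537094464346617958835372979521636026166421244087043167021767739699924806823908396251485793831297025871207335091342843,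
    132013615456362665870942612896293511704260677814492200,
    132027530650715461914221511026609941578164193633100435,
    269828332074404910840005061381266658071082685837430972869,
    273388937759344342122537911037199425338874379783336422190, 1800964, 0,
    3626708924627183305255518167200683148302292503533210531536569108381836115628,
    3626688623475725328384168423985819077823048216463825638552279325848384108840,
    2325593314233823717490889709781611015021299227303666901813888169948095007471257456527776567165905343676696029180009123,
    1163064747750228102720015912399552287802472602959096582337156223765575491991449791055605962093534572890352228621700823,
    32059073184113183479827259563717146434098986789047248793,
    32059025253977571512066706752177420208363991882078886692, 67953149146712170,
    67335192115380163, 10, 10,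
    3626688623475725328384168423985819077823048216463825638552279325848384108840,
    6863402704369079580233978563765898840059945822307860606521254825707727007535,
    1163064747750228102720015912399552287802472602959096582337156223765575491991449791055605962093534572890352228621700823,
    1163583027955251834336605976154219373463778538821499188678787932261841024557809967255146689528341974000664442822967055,
    32059025253977571512066706752177420208363991882078886692,
    32059067514934271980422341148431773836572154918445767364, 67335192115380163,
    67336326870701275, 10, 10,
    33898405909600780038292587870040262240173366880885922718801483795713221319928,
    32729612285370675576036366987617364500166051393964448698797379497999886331023,
    909217013554815583286410272258369157, 908938885165256618896350012187704220, 46547585344,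
    46540676611, 30282769387, 15173369587, 378947612692, 377785171621, 0, 2548,
    32729612285370675576036366987617364500166051393964448698797379497999886331023,
    55386269787426803391171301150653842696725556444556194193277755430299240134941,
    908938885165256618896350012187704220, 1727471922252712129867986824519422549, 46540676611,
    88387056100, 15173369587, 29125467307, 377785171621, 377785705258, 2548, 2800,
    6080062143037581757323900652907757765824934378035884315283017287759633222679001129918259075996789291632056278198309177574964332615384304438469950352211518227601156597266166630199335409548737621063708059816118236125777623764531517628750535,
    6057894597538367213421900006495976632449235241499228729013106887441998882110748267429888062854634957571748211438775924846450752643279243461765166384126164873744089092804907889597942655198203156110522063961812560083097247963332181913833916,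
    1188723358012745020378667364039918848806887833558124257509567186417967997181226557489730816453783528515791816364801507,
    1175806349635166417757777370605708102985247091971537855695484221140185629946409547500683749228453864495380652633751485,
    9979815767485966103657512, 9660749994285430325671117, 285041249368212926480167999,
    259196775911908640359081975, 45832791115, 45775395244, 53569, 27325, 1, 1,
    6057894597538367213421900006495976632449235241499228729013106887441998882110748267429888062854634957571748211438775924846450752643279243461765166384126164873744089092804907889597942655198203156110522063961812560083097247963332181913833916,
    6058510373988176842883047952428143832798841709822356923986085325904917378851079460546006653655686177825755884736703691825248893728243098371966165359020603764039916363871165554959952430162732714062529670322782208975451619163055242920836562,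
    1175806349635166417757777370605708102985247091971537855695484221140185629946409547500683749228453864495380652633751485,
    1176165161509192878133759212524919175428069136794474694484053863854937572774303111352084159364505917780283081398977544,
    9660749994285430325671117, 9669614434037771096557378, 259196775911908640359081975,
    259914783470768593615959634, 45775395244, 56278991998, 27325, 47278, 1, 1]

/-- Multiplication of `c` by the polynomial encoded by `n` (base 3); `nc` is `-c`. -/
def mulN (c nc : List ℤ) : ℕ → ℕ → List ℤ
  | 0, _ => []
  | k + 1, n =>
    cond (Nat.beq n 0) [] <|
    match n % 3 with
    | 0 => 0 :: mulN c nc k (n / 3)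
    | 1 => addL c (0 :: mulN c nc k (n / 3))
    | _ => addL nc (0 :: mulN c nc k (n / 3))

def isZ : ℤ → Bool
  | .ofNat 0 => true
  | _ => false

theorem isZ_iff (a : ℤ) : isZ a = true ↔ a = 0 := by
  rcases a with (_ | k) | k
  · exact ⟨fun _ => rfl, fun _ => rfl⟩
  · simp only [isZ]
    constructor
    · intro h; simp at h
    · intro h; exact absurd h (by simp; omega)
  · simp [isZ]

def allZ : List ℤ → Bool
  | [] => true
  | a :: l => cond (isZ a) (allZ l) false

/-- Entries `±1`, followed by entries `0`. -/
def lwL : List ℤ → Bool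
  | [] => false
  | a :: l => cond (leB a 1) (cond (isZ a) false (cond (lwL l) true (allZ l))) false

theorem le_of_leB (q : ℤ) (B : ℕ) (h : leB q B = true) : |q| ≤ B := by
  rcases q with k | k
  · simp only [leB] at h
    rw [Nat.ble_eq] at h
    have : |((k : ℤ))| ≤ B := by rw [abs_of_nonneg (by omega)]; omega
    exact this
  · simp only [leB] at h
    rw [Nat.ble_eq] at h
    have e : Int.negSucc k = -((k : ℤ) + 1) := rfl
    rw [e, abs_neg, abs_of_nonneg (by omega)]
    omega

theorem toP_mulN (c : List ℤ) (k n : ℕ) : toP c ∣ toP (mulN c (negL c) k n) := by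
  induction k generalizing n with
  | zero => simp [mulN, toP]
  | succ k ih =>
    have h := (ih (n / 3)).mul_left X
    have e : ∀ l, toP (0 :: l) = X * toP l := by intro l; simp [toP]
    rw [mulN]
    cases Nat.beq n 0 with
    | true => simp [toP]
    | false =>
      rw [cond_false]
      split
      · rw [e]; exact h
      · rw [toP_addL, e]; exact dvd_add dvd_rfl h
      · rw [toP_addL, e, toP_negL]; exact dvd_add (dvd_neg.mpr dvd_rfl) h

theorem allZ_toP (l : List ℤ) (h : allZ l = true) : toP l = 0 := by
  induction l with
  | nil => rfl
  | cons a l ih =>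
    rw [allZ, Bool.cond_false_right, Bool.and_eq_true, isZ_iff] at h
    simp [toP, h.1, ih h.2]

theorem lwL_toP (l : List ℤ) (h : lwL l = true) : toP l ≠ 0 ∧ IsLittlewood (toP l) := by
  induction l with
  | nil => simp [lwL] at h
  | cons a l ih =>
    rw [lwL] at h
    cases h1 : leB a 1 with
    | false => rw [h1] at h; simp at h
    | true =>
    cases h2 : isZ a with
    | true => rw [h1, h2] at h; simp at h
    | false =>
    rw [h1, h2, cond_true, cond_false] at h
    have ha := abs_le.mp (le_of_leB a 1 h1)
    have ha0 : a ≠ 0 := by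
      intro h0
      rw [(isZ_iff a).mpr h0] at h2
      simp at h2
    have ha1 : a = -1 ∨ a = 1 := by
      have h3 := ha.1
      have h4 := ha.2
      push_cast at h3 h4
      omega
    refine ⟨fun h0 => ha0 ?_, ?_⟩
    · rw [← coeff_toP_zero a l, h0, coeff_zero]
    intro i hi
    cases i with
    | zero => rw [coeff_toP_zero]; simpa using ha1
    | succ i =>
      rw [coeff_toP_succ]
      cases h3 : lwL l with
      | true =>
        obtain ⟨h4, h5⟩ := ih h3
        apply h5
        have h6 : (toP (a :: l)).natDegree ≤ (toP l).natDegree + 1 := by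
          rw [natDegree_le_iff_coeff_eq_zero]
          intro N hN
          obtain ⟨N, rfl⟩ : ∃ k, N = k + 1 := ⟨N - 1, by omega⟩
          rw [coeff_toP_succ]
          exact coeff_eq_zero_of_natDegree_lt (by omega)
        omega
      | false =>
        rw [h3, cond_false] at h
        have h4 := allZ_toP l h
        rw [toP, h4] at hi
        simp at hi

/-- Lists of length `k` over `{-1,0,1}` with exactly `m` nonzero entries. -/
def cands : ℕ → ℕ → List (List ℤ)
  | 0, 0 => [[]]
  | 0, _ + 1 => []
  | k + 1, 0 => (cands k 0).map (0 :: ·)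
  | k + 1, m + 1 => (cands k (m + 1)).map (0 :: ·) ++ ((cands k m).map (1 :: ·) ++
      (cands k m).map (-1 :: ·))

theorem mem_cands (l : List ℤ) (h : ∀ a ∈ l, a = -1 ∨ a = 0 ∨ a = 1) :
    l ∈ cands l.length (l.countP (· ≠ 0)) := by
  induction l with
  | nil => simp [cands]
  | cons a l ih =>
    have ih' := ih (fun x hx => h x (by simp [hx]))
    rcases h a (by simp) with rfl | rfl | rfl
    · rw [List.countP_cons_of_pos (by simp), List.length_cons, cands]
      simpa using ih'
    · rw [List.countP_cons_of_neg (by simp), List.length_cons]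
      cases hm : l.countP (· ≠ 0) with
      | zero => rw [hm] at ih'; simp [cands, ih']
      | succ m => rw [hm] at ih'; simp [cands, ih']
    · rw [List.countP_cons_of_pos (by simp), List.length_cons, cands]
      simpa using ih'

/-- The exceptional quadrinomials with constant term 1 (which is omitted). -/
def badT : List (List ℤ) :=
  [[1, 0, -1, 1, 0, 0, 0, 0, 0],
   [-1, 0, 1, 1, 0, 0, 0, 0, 0],
   [1, 0, 0, 0, 1, -1, 0, 0, 0],
   [-1, 0, 0, 0, -1, -1, 0, 0, 0],
   [0, 0, 1, 0, -1, 0, 0, 1, 0],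
   [0, 0, -1, 0, 1, 0, 0, 1, 0],
   [-1, 0, 0, 0, 0, 0, 1, 1, 0],
   [1, 0, 0, 0, 0, 0, -1, 1, 0],
   [0, -1, 0, 0, 0, 1, 0, 1, 0],
   [0, 1, 0, 0, 0, -1, 0, 1, 0]]

def chk1 (t : List ℤ) (n : ℕ) : Bool :=
  cond (Nat.beq n 0) (decide (t ∈ badT)) (lwL (mulN (1 :: t) (negL (1 :: t)) 600 n))

def chkAll : List (List ℤ) → List ℕ → Bool
  | [], _ => true
  | _ :: _, [] => false
  | t :: ts, n :: ns => cond (chk1 t n) (chkAll ts ns) false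

theorem chkAll_spec (ts : List (List ℤ)) (ns : List ℕ) (h : chkAll ts ns = true) :
    ∀ t ∈ ts, t ∈ badT ∨ ∃ L, IsLittlewood L ∧ toP (1 :: t) ∣ L := by
  induction ts generalizing ns with
  | nil => simp
  | cons t ts ih =>
    cases ns with
    | nil => simp [chkAll] at h
    | cons n ns =>
      rw [chkAll, Bool.cond_false_right, Bool.and_eq_true] at h
      intro s hs
      rcases List.mem_cons.mp hs with rfl | hs
      · have h1 := h.1
        rw [chk1] at h1
        cases hn : Nat.beq n 0 with
        | true => rw [hn, cond_true] at h1; exact Or.inl (of_decide_eq_true h1)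
        | false =>
          rw [hn, cond_false] at h1
          exact Or.inr ⟨_, (lwL_toP _ h1).2, toP_mulN _ _ _⟩
      · exact ih ns h.2 s hs

theorem chkAll_certs : chkAll (cands 9 3) certs = true := by decide +kernel

/-! ### Putting things together -/

theorem card_support_toP (l : List ℤ) : (toP l).support.card = l.countP (· ≠ 0) := by
  induction l with
  | nil => simp [toP]
  | cons a l ih =>
    have e : (toP (a :: l)).support =
        (if a = 0 then ∅ else {0}) ∪ (toP l).support.map ⟨Nat.succ, Nat.succ_injective⟩ := by
      ext n
      cases n with
      | zero =>
        rw [mem_support_iff, coeff_toP_zero]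
        by_cases ha : a = 0 <;> simp [ha]
      | succ n =>
        rw [mem_support_iff, coeff_toP_succ]
        by_cases ha : a = 0 <;> simp [ha]
    rw [e, Finset.card_union_of_disjoint, Finset.card_map, ih]
    · by_cases ha : a = 0
      · simp [ha]
      · rw [List.countP_cons_of_pos (by simpa using ha)]; simp [ha]; omega
    · by_cases ha : a = 0 <;> simp [ha]

theorem eq_toP (P : ℤ[X]) (h : P.natDegree ≤ 9) :
    P = toP (P.coeff 0 :: (List.range 9).map (fun i => P.coeff (i + 1))) := by
  ext n
  cases n with
  | zero => rw [coeff_toP_zero]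
  | succ n =>
    rw [coeff_toP_succ, coeff_toP]
    by_cases hn : n < 9
    · simp [List.getD, hn]
    · rw [coeff_eq_zero_of_natDegree_lt (by omega)]
      simp [List.getD, hn]

theorem classify_one (P : ℤ[X]) (hB : IsBorwein P) (hd : P.natDegree ≤ 9)
    (hc : P.support.card = 4) (h1 : P.coeff 0 = 1) :
    (∃ t ∈ badT, P = toP (1 :: t)) ∨ ∃ L, IsLittlewood L ∧ P ∣ L := by
  have e := eq_toP P hd
  rw [h1] at e
  set t := (List.range 9).map (fun i => P.coeff (i + 1)) with ht
  have hl : t.length = 9 := by simp [ht]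
  have hcount : t.countP (· ≠ 0) = 3 := by
    rw [e, card_support_toP, List.countP_cons_of_pos (by simp)] at hc
    omega
  have hmem : t ∈ cands 9 3 := by
    rw [← hl, ← hcount]
    apply mem_cands
    intro a ha
    obtain ⟨i, -, rfl⟩ := List.mem_map.mp ha
    have := hB.1 (i + 1)
    simpa using this
  rcases chkAll_spec _ _ chkAll_certs t hmem with h | h
  · exact Or.inl ⟨t, h, e⟩
  · rw [← e] at h; exact Or.inr h

theorem classify (P : ℤ[X]) (hB : IsBorwein P) (hd : P.natDegree ≤ 9)
    (hc : P.support.card = 4) :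
    (∃ t ∈ badT, P = toP (1 :: t) ∨ P = - toP (1 :: t)) ∨ ∃ L, IsLittlewood L ∧ P ∣ L := by
  have h0 := hB.1 0
  simp only [Set.mem_insert_iff, Set.mem_singleton_iff] at h0
  rcases h0 with h | h | h
  · have hB' : IsBorwein (-P) := by
      refine ⟨fun i => ?_, by simpa using hB.2⟩
      have := hB.1 i
      simp only [Set.mem_insert_iff, Set.mem_singleton_iff, coeff_neg] at this ⊢
      omega
    rcases classify_one (-P) hB' (by simpa using hd) (by simpa using hc) (by simp [h])
      with ⟨t, ht, e⟩ | ⟨L, hL, hdvd⟩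
    · exact Or.inl ⟨t, ht, Or.inr (by rw [← e, neg_neg])⟩
    · exact Or.inr ⟨L, hL, (neg_dvd).mp hdvd⟩
  · exact absurd h hB.2
  · rcases classify_one P hB hd hc h with ⟨t, ht, e⟩ | h
    · exact Or.inl ⟨t, ht, Or.inl e⟩
    · exact Or.inr h

theorem noLM_neg {P : ℤ[X]} (h : NoLM P) : NoLM (-P) := by
  rintro ⟨L, hL, hd⟩
  exact h ⟨L, hL, neg_dvd.mp hd⟩

theorem coeff_comp_neg (L : ℤ[X]) (n : ℕ) : (L.comp (-X)).coeff n = L.coeff n * (-1) ^ n := by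
  have e : (-X : ℤ[X]) = C (-1) * X := by simp
  rw [e, comp_C_mul_X_coeff]

theorem noLM_comp {P : ℤ[X]} (h : NoLM P) : NoLM (P.comp (-X)) := by
  rintro ⟨L, hL, Q, rfl⟩
  refine h ⟨(P.comp (-X) * Q).comp (-X), ?_, Q.comp (-X), ?_⟩
  · intro i hi
    rw [natDegree_comp, natDegree_neg, natDegree_X, mul_one] at hi
    have := hL i hi
    rw [coeff_comp_neg]
    simp only [Set.mem_insert_iff, Set.mem_singleton_iff] at this ⊢
    rcases neg_one_pow_eq_or ℤ i with h | h <;> rw [h] <;> omega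
  · rw [mul_comp, comp_assoc]
    simp

theorem bad_noLM : ∀ Q ∈ badQuad, NoLM Q := by
  have ha := qa_no
  have hb := qb_no
  have hc := qc_no
  have hd := qd_no
  have he := qe_no
  have ha' := noLM_comp ha
  have hb' := noLM_comp hb
  have hc' := noLM_comp hc
  have hd' := noLM_comp hd
  have hb2 := noLM_neg hb
  have hb2' := noLM_neg hb'
  intro Q hQ
  simp only [badQuad, List.mem_cons, List.not_mem_nil, or_false] at hQ
  rcases hQ with rfl | rfl | rfl | rfl | rfl | rfl | rfl | rfl | rfl | rfl
  · convert ha using 1; simp [toP]; ring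
  · convert ha' using 1; simp [toP]; ring
  · convert hb2 using 1; simp [toP]; ring
  · convert hb2' using 1; simp [toP]; ring
  · convert hc using 1; simp [toP]; ring
  · convert hc' using 1; simp [toP]; ring
  · convert hd using 1; simp [toP]; ring
  · convert hd' using 1; simp [toP]; ring
  · convert he using 1; simp [toP]; ring
  · convert qf_no using 1; simp [toP]; ring

theorem badT_badQuad : ∀ t ∈ badT, ∃ Q ∈ badQuad, toP (1 :: t) = Q ∨ toP (1 :: t) = -Q := by
  intro t ht
  simp only [badT, List.mem_cons, List.not_mem_nil, or_false] at ht
  rcases ht with rfl | rfl | rfl | rfl | rfl | rfl | rfl | rfl | rfl | rfl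
  · exact ⟨X ^ 4 - X ^ 3 + X + 1, by simp [badQuad], Or.inl (by simp [toP]; ring)⟩
  · exact ⟨X ^ 4 + X ^ 3 - X + 1, by simp [badQuad], Or.inl (by simp [toP]; ring)⟩
  · exact ⟨X ^ 6 - X ^ 5 - X - 1, by simp [badQuad], Or.inr (by simp [toP]; ring)⟩
  · exact ⟨X ^ 6 + X ^ 5 + X - 1, by simp [badQuad], Or.inr (by simp [toP]; ring)⟩
  · exact ⟨X ^ 8 - X ^ 5 + X ^ 3 + 1, by simp [badQuad], Or.inl (by simp [toP]; ring)⟩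
  · exact ⟨X ^ 8 + X ^ 5 - X ^ 3 + 1, by simp [badQuad], Or.inl (by simp [toP]; ring)⟩
  · exact ⟨X ^ 8 + X ^ 7 - X + 1, by simp [badQuad], Or.inl (by simp [toP]; ring)⟩
  · exact ⟨X ^ 8 - X ^ 7 + X + 1, by simp [badQuad], Or.inl (by simp [toP]; ring)⟩
  · exact ⟨X ^ 8 + X ^ 6 - X ^ 2 + 1, by simp [badQuad], Or.inl (by simp [toP]; ring)⟩
  · exact ⟨X ^ 8 - X ^ 6 + X ^ 2 + 1, by simp [badQuad], Or.inl (by simp [toP]; ring)⟩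

theorem part_one (P : ℤ[X]) (hB : IsBorwein P) (hd : P.natDegree ≤ 9)
    (hc : P.support.card = 4) :
    (¬ ∃ L : ℤ[X], IsLittlewood L ∧ P ∣ L) ↔ ∃ Q ∈ badQuad, P = Q ∨ P = -Q := by
  constructor
  · intro h
    rcases classify P hB hd hc with ⟨t, ht, e⟩ | h'
    · obtain ⟨Q, hQ, e'⟩ := badT_badQuad t ht
      refine ⟨Q, hQ, ?_⟩
      rcases e with e | e <;> rcases e' with e' | e' <;> rw [e, e'] <;> simp
    · exact absurd h' h
  · rintro ⟨Q, hQ, rfl | rfl⟩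
    · exact bad_noLM _ hQ
    · exact noLM_neg (bad_noLM _ hQ)

/-- Coefficient lists of all twenty exceptional quadrinomials. -/
def bad20 : List (List ℤ) :=
  badT.map (1 :: ·) ++ badT.map (fun t => negL (1 :: t))

theorem bad20_spec : ∀ l ∈ bad20, l.length = 10 ∧ (∀ a ∈ l, a = -1 ∨ a = 0 ∨ a = 1) ∧
    l.getD 0 0 ≠ 0 ∧ l.countP (· ≠ 0) = 4 := by decide +kernel

theorem set_eq : {P : ℤ[X] | IsBorwein P ∧ P.natDegree ≤ 9 ∧ P.support.card = 4 ∧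
    ¬ ∃ L : ℤ[X], IsLittlewood L ∧ P ∣ L} = toP '' (bad20.toFinset : Set (List ℤ)) := by
  ext P
  simp only [Set.mem_setOf_eq, Set.mem_image, Finset.mem_coe, List.mem_toFinset]
  constructor
  · rintro ⟨hB, hd, hc, hn⟩
    rcases classify P hB hd hc with ⟨t, ht, e | e⟩ | h'
    · exact ⟨1 :: t, List.mem_append_left _ (List.mem_map.mpr ⟨t, ht, rfl⟩), e.symm⟩
    · exact ⟨negL (1 :: t), List.mem_append_right _ (List.mem_map.mpr ⟨t, ht, rfl⟩),
        by rw [toP_negL, e]⟩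
    · exact absurd h' hn
  · rintro ⟨l, hl, rfl⟩
    obtain ⟨h1, h2, h3, h4⟩ := bad20_spec l hl
    have hB : IsBorwein (toP l) := by
      refine ⟨fun i => ?_, by rw [coeff_toP]; exact h3⟩
      rw [coeff_toP]
      by_cases hi : i < l.length
      · have e : l.getD i 0 = l[i] := by simp [hi]
        rw [e]
        simpa using h2 l[i] (List.getElem_mem hi)
      · rw [List.getD_eq_default _ _ (by omega)]; simp
    have hd : (toP l).natDegree ≤ 9 := by
      rw [natDegree_le_iff_coeff_eq_zero]
      intro N hN
      rw [coeff_toP, List.getD_eq_default _ _ (by omega)]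
    have hc : (toP l).support.card = 4 := by rw [card_support_toP, h4]
    refine ⟨hB, hd, hc, (part_one _ hB hd hc).mpr ?_⟩
    rcases List.mem_append.mp hl with h | h
    · obtain ⟨t, ht, rfl⟩ := List.mem_map.mp h
      exact badT_badQuad t ht
    · obtain ⟨t, ht, rfl⟩ := List.mem_map.mp h
      obtain ⟨Q, hQ, e⟩ := badT_badQuad t ht
      refine ⟨Q, hQ, ?_⟩
      rw [toP_negL]
      rcases e with e | e <;> rw [e] <;> simp

theorem toP_inj : Set.InjOn toP (bad20.toFinset : Set (List ℤ)) := by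
  intro l hl m hm e
  simp only [Finset.mem_coe, List.mem_toFinset] at hl hm
  have h1 := (bad20_spec l hl).1
  have h2 := (bad20_spec m hm).1
  apply List.ext_getElem (by omega)
  intro i hi hi'
  have := congrArg (fun P => P.coeff i) e
  simp only [coeff_toP] at this
  simpa [hi, hi'] using this

/-- A Borwein polynomial of degree at most 9 with exactly four nonzero
coefficients divides no Littlewood polynomial iff it equals `±Q` for one of the
ten listed quadrinomials `Q`; in particular there are exactly 20 such
quadrinomials. -/
theorem borwein_quadrinomial_no_littlewood :
    (∀ P : Polynomial ℤ, IsBorwein P → P.natDegree ≤ 9 → P.support.card = 4 →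
      ((¬ ∃ L : Polynomial ℤ, IsLittlewood L ∧ P ∣ L) ↔
        ∃ Q ∈ badQuad, P = Q ∨ P = -Q)) ∧
    {P : Polynomial ℤ | IsBorwein P ∧ P.natDegree ≤ 9 ∧ P.support.card = 4 ∧
      ¬ ∃ L : Polynomial ℤ, IsLittlewood L ∧ P ∣ L}.ncard = 20 := by
  refine ⟨part_one, ?_⟩
  rw [set_eq, Set.ncard_image_of_injOn toP_inj, Set.ncard_coe_finset]
  decide +kernel
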